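/- arXiv:1206.7094 — 6 statements merged into one kernel-verified Lean document; each statement's English description precedes it below -/
import Mathlib

section
/- The PCB ideal I is unmixed if and only if I is a lattice ideal, i.e., if and only if there exists a subgroup 𝓛 ⊆ ℤ^n with I = I(𝓛). -/
open MvPolynomial

/-!
Write `A = k[x_0, …, x_n]`. Both conditions on the PCB ideal `I` are equivalent to: every variable
is a nonzerodivisor modulo `I`.

The PCB matrix is singular with negative off-diagonal entries, so it has a left null vector `d`
with positive entries (`exists_weights`), for which `I` is homogeneous. A prime containing `I` and
one variable contains all variables (`X_mem_of_X_mem`), and the origin is not a minimal prime, since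
the kernel of `x_i ↦ t ^ d_i` is a strictly smaller prime containing `I`
(`exists_prime_avoiding_X`). Hence, if `I` is unmixed, no associated prime contains a variable, and
variables are nonzerodivisors modulo `I`. An ideal generated by differences of monomials with this
property is a lattice ideal (`exists_lattice`).

Conversely, a lattice ideal is the kernel of a map to a group algebra, so variables are
nonzerodivisors modulo it (`lattice_saturated`). Let `p` be an associated prime of `A / I` and
suppose `I ⊆ q ⊊ p` with `q` prime. Neither contains a variable. The PCB matrix has corank one, so
in `A / q` some positive power of each variable is a power of `x_0`; thus `A / q` is integral over
`k[x_0]`, and `p` contains a nonzero polynomial in `x_0` (`exists_aeval_X_zero_mem`). But by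
homogeneity such a polynomial is a nonzerodivisor modulo `I` (`mem_of_aeval_X_zero_mul_mem`),
a contradiction.
-/

/-! ### Linear algebra of the PCB matrix -/

/-- The PCB matrix of `a`: diagonal entries `a i i`, off-diagonal entries `-a i j`. -/
def pcbMatrix {m : ℕ} (a : Fin m → Fin m → ℕ) : Matrix (Fin m) (Fin m) ℤ :=
  fun i j => if i = j then (a i j : ℤ) else -(a i j : ℤ)

lemma pcbMatrix_self {m : ℕ} (a : Fin m → Fin m → ℕ) (i : Fin m) :
    pcbMatrix a i i = a i i := by simp [pcbMatrix]

lemma pcbMatrix_of_ne {m : ℕ} (a : Fin m → Fin m → ℕ) {i j : Fin m} (h : i ≠ j) :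
    pcbMatrix a i j = -(a i j : ℤ) := by simp [pcbMatrix, h]

lemma pcbMatrix_det {m : ℕ} [NeZero m] (a : Fin m → Fin m → ℕ)
    (hsum : ∀ i, a i i = ∑ j ∈ Finset.univ.erase i, a i j) : (pcbMatrix a).det = 0 := by
  rw [← Matrix.exists_mulVec_eq_zero_iff]
  refine ⟨fun _ => 1, fun h => one_ne_zero (congrFun h 0), ?_⟩
  ext i
  rw [Matrix.mulVec, dotProduct, ← Finset.add_sum_erase _ _ (Finset.mem_univ i),
    Finset.sum_congr rfl (fun j hj => by rw [pcbMatrix_of_ne a (Finset.ne_of_mem_erase hj).symm]),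
    pcbMatrix_self, hsum i]
  simp

/-- A nonzero left null vector of the PCB matrix exists since the matrix is singular. Taking
absolute values gives inequalities between the two sides; as both sides have the same total, all
of them are equalities, and positivity of the `a i j` then makes every coordinate positive. -/
lemma exists_weights {m : ℕ} [NeZero m] (a : Fin m → Fin m → ℕ) (hpos : ∀ i j, 0 < a i j)
    (hsum : ∀ i, a i i = ∑ j ∈ Finset.univ.erase i, a i j) :
    ∃ d : Fin m → ℕ, (∀ i, 0 < d i) ∧
      ∀ j, d j * a j j = ∑ i ∈ Finset.univ.erase j, d i * a i j := by
  obtain ⟨v, hv0, hv⟩ := Matrix.exists_vecMul_eq_zero_iff.mpr (pcbMatrix_det a hsum)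
  have key : ∀ j, v j * a j j = ∑ i ∈ Finset.univ.erase j, v i * a i j := by
    intro j
    have := congrFun hv j
    rw [Matrix.vecMul, dotProduct, ← Finset.add_sum_erase _ _ (Finset.mem_univ j),
      Finset.sum_congr rfl (fun i hi => by rw [pcbMatrix_of_ne a (Finset.ne_of_mem_erase hi)]),
      pcbMatrix_self] at this
    simp only [mul_neg, Finset.sum_neg_distrib, Pi.zero_apply] at this
    linarith
  have hle : ∀ j ∈ Finset.univ, (v j).natAbs * a j j ≤
      ∑ i ∈ Finset.univ.erase j, (v i).natAbs * a i j := by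
    intro j _
    have h := congrArg abs (key j)
    have h2 := Finset.abs_sum_le_sum_abs (fun i => v i * (a i j : ℤ)) (Finset.univ.erase j)
    rw [← h] at h2
    simp only [abs_mul, Nat.abs_cast] at h2
    zify
    exact h2
  have htot : ∑ j, (v j).natAbs * a j j =
      ∑ j, ∑ i ∈ Finset.univ.erase j, (v i).natAbs * a i j := by
    rw [Finset.sum_comm' (t' := Finset.univ) (s' := fun i => Finset.univ.erase i)
      (by intro x y; simp [ne_comm])]
    exact Finset.sum_congr rfl fun i _ => by rw [hsum i, Finset.mul_sum]
  have heq := (Finset.sum_eq_sum_iff_of_le hle).mp htot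
  refine ⟨fun i => (v i).natAbs, fun j => ?_, fun j => heq j (Finset.mem_univ j)⟩
  obtain ⟨i, hi⟩ := Function.ne_iff.mp hv0
  by_cases hij : j = i
  · subst hij; exact Int.natAbs_pos.mpr hi
  · refine Nat.pos_of_mul_pos_right (b := a j j) ?_
    rw [heq j (Finset.mem_univ j)]
    refine lt_of_lt_of_le (Nat.mul_pos (Int.natAbs_pos.mpr hi) (hpos i j)) ?_
    exact Finset.single_le_sum (f := fun i => (v i).natAbs * a i j) (fun _ _ => Nat.zero_le _)
      (Finset.mem_erase.mpr ⟨Ne.symm hij, Finset.mem_univ i⟩)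

/-- Deleting the row and column of index `0` leaves a strictly diagonally dominant matrix. -/
lemma pcbMatrix_minor_det_ne_zero {n : ℕ} (a : Fin (n + 1) → Fin (n + 1) → ℕ)
    (hpos : ∀ i j, 0 < a i j) (hsum : ∀ i, a i i = ∑ j ∈ Finset.univ.erase i, a i j) :
    ((pcbMatrix a).submatrix Fin.succ Fin.succ).det ≠ 0 := by
  set B := (pcbMatrix a).submatrix Fin.succ Fin.succ with hB
  have h : (B.map (Int.castRingHom ℝ)).det ≠ 0 := by
    apply det_ne_zero_of_sum_row_lt_diag
    intro i
    have h1 : ∀ j ∈ Finset.univ.erase i,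
        ‖B.map (Int.castRingHom ℝ) i j‖ = (a i.succ j.succ : ℝ) := by
      intro j hj
      have : i.succ ≠ j.succ := fun h => Finset.ne_of_mem_erase hj (Fin.succ_injective _ h).symm
      simp [hB, pcbMatrix_of_ne a this]
    rw [Finset.sum_congr rfl h1]
    have h2 : ‖B.map (Int.castRingHom ℝ) i i‖ = (a i.succ i.succ : ℝ) := by
      simp [hB, pcbMatrix_self]
    rw [h2]
    norm_cast
    have h3 := Finset.add_sum_erase Finset.univ (fun j => a i.succ j) (Finset.mem_univ i.succ)
    rw [Fin.sum_univ_succ,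
      ← Finset.add_sum_erase Finset.univ (fun j => a i.succ j.succ) (Finset.mem_univ i)] at h3
    have h4 := hpos i.succ 0
    have h5 := hsum i.succ
    omega
  intro h0
  apply h
  have := (Int.castRingHom ℝ).map_det B
  rw [h0, map_zero] at this
  exact this.symm

/-- Some vector `δ e_{i+1} - w e_0` with `δ > 0` and `w ≥ 0` is an integral
combination of the columns of the PCB matrix. The combination comes from the adjugate of the minor
(times its determinant, to make `δ` a square); pairing with the weights shows `w ≥ 0`. -/
lemma exists_combination {n : ℕ} (a : Fin (n + 1) → Fin (n + 1) → ℕ)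
    (hpos : ∀ i j, 0 < a i j) (hsum : ∀ i, a i i = ∑ j ∈ Finset.univ.erase i, a i j)
    (i : Fin n) : ∃ (c : Fin (n + 1) → ℤ) (δ : ℕ) (w : ℕ), 0 < δ ∧
      (∀ l : Fin n, ∑ j, pcbMatrix a l.succ j * c j = if l = i then (δ : ℤ) else 0) ∧
      ∑ j, pcbMatrix a 0 j * c j = -(w : ℤ) := by
  obtain ⟨d, hd, hdw⟩ := exists_weights a hpos hsum
  set B := (pcbMatrix a).submatrix Fin.succ Fin.succ with hB
  have hdet : B.det ≠ 0 := pcbMatrix_minor_det_ne_zero a hpos hsum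
  have hdet2 : 0 < B.det.natAbs ^ 2 := pow_pos (Int.natAbs_pos.mpr hdet) 2
  let c : Fin (n + 1) → ℤ := Fin.cons 0 (fun j => B.det * B.adjugate j i)
  have hc : ∀ l : Fin n, ∑ j, pcbMatrix a l.succ j * c j =
      if l = i then ((B.det.natAbs ^ 2 : ℕ) : ℤ) else 0 := by
    intro l
    rw [Fin.sum_univ_succ]
    have := congrFun (congrFun (Matrix.mul_adjugate B) l) i
    rw [Matrix.mul_apply] at this
    simp only [c, Fin.cons_zero, Fin.cons_succ, mul_zero, zero_add]
    calc _ = B.det * ∑ j, B l j * B.adjugate j i := by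
          rw [Finset.mul_sum]
          exact Finset.sum_congr rfl fun j _ => by simp only [hB, Matrix.submatrix_apply]; ring
      _ = _ := by
          rw [this, Matrix.smul_apply, Matrix.one_apply]
          split_ifs <;> simp [sq]
  have hz : ∑ l, (d l : ℤ) * ∑ j, pcbMatrix a l j * c j = 0 := by
    simp_rw [Finset.mul_sum]
    rw [Finset.sum_comm]
    refine Finset.sum_eq_zero fun j _ => ?_
    simp_rw [← mul_assoc]
    rw [← Finset.sum_mul, ← Finset.add_sum_erase _ _ (Finset.mem_univ j),
      Finset.sum_congr rfl (fun i hi => by rw [pcbMatrix_of_ne a (Finset.ne_of_mem_erase hi)]),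
      pcbMatrix_self]
    have := congrArg (Nat.cast (R := ℤ)) (hdw j)
    push_cast at this
    rw [this]
    simp
  have hle : ∑ j, pcbMatrix a 0 j * c j ≤ 0 := by
    rw [Fin.sum_univ_succ] at hz
    simp_rw [hc] at hz
    simp only [mul_ite, mul_zero, Finset.sum_ite_eq', Finset.mem_univ, if_true] at hz
    by_contra hcon
    push Not at hcon
    have h1 : 0 < (d 0 : ℤ) * ∑ j, pcbMatrix a 0 j * c j :=
      mul_pos (by exact_mod_cast hd 0) hcon
    have h2 : (0 : ℤ) ≤ (d i.succ : ℤ) * ((B.det.natAbs ^ 2 : ℕ) : ℤ) := by positivity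
    linarith
  refine ⟨c, B.det.natAbs ^ 2, (∑ j, pcbMatrix a 0 j * c j).natAbs, hdet2, hc, ?_⟩
  omega

/-! ### Integrality and torsion-freeness over `k[x_0]` -/

/-- In a field, nonzero solutions of the PCB equations satisfy `y_i ^ δ = y_0 ^ w` with `δ > 0`. -/
lemma exists_pow_eq_pow {n : ℕ} (a : Fin (n + 1) → Fin (n + 1) → ℕ)
    (hpos : ∀ i j, 0 < a i j) (hsum : ∀ i, a i i = ∑ j ∈ Finset.univ.erase i, a i j)
    {K : Type*} [Field K] (y : Fin (n + 1) → K) (hy : ∀ i, y i ≠ 0)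
    (hrel : ∀ j, y j ^ a j j = ∏ i ∈ Finset.univ.erase j, y i ^ a i j) (i : Fin n) :
    ∃ δ w : ℕ, 0 < δ ∧ y i.succ ^ δ = y 0 ^ w := by
  obtain ⟨c, δ, w, hδ, hc, hc0⟩ := exists_combination a hpos hsum i
  refine ⟨δ, w, hδ, ?_⟩
  have hcol : ∀ j, ∏ l, y l ^ pcbMatrix a l j = 1 := by
    intro j
    rw [← Finset.mul_prod_erase _ _ (Finset.mem_univ j),
      Finset.prod_congr rfl (fun i hi => by
        rw [pcbMatrix_of_ne a (Finset.ne_of_mem_erase hi), zpow_neg, zpow_natCast]),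
      pcbMatrix_self, zpow_natCast, hrel j, ← Finset.prod_mul_distrib]
    exact Finset.prod_eq_one fun i _ => mul_inv_cancel₀ (pow_ne_zero _ (hy i))
  have hsumpow : ∀ (l : Fin (n + 1)) (s : Finset (Fin (n + 1))) (e : Fin (n + 1) → ℤ),
      y l ^ (∑ j ∈ s, e j) = ∏ j ∈ s, y l ^ e j := by
    intro l s e
    induction s using Finset.induction_on with
    | empty => simp
    | insert b s hb ih => rw [Finset.sum_insert hb, Finset.prod_insert hb, zpow_add₀ (hy l), ih]
  have htot : ∏ l, y l ^ (∑ j, pcbMatrix a l j * c j) = 1 := by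
    simp_rw [hsumpow, zpow_mul]
    rw [Finset.prod_comm]
    refine Finset.prod_eq_one fun j _ => ?_
    rw [Finset.prod_zpow, hcol, one_zpow]
  rw [Fin.prod_univ_succ, hc0] at htot
  simp_rw [hc] at htot
  rw [Finset.prod_eq_single i (fun b _ hb => by simp [hb]) (by simp), if_pos rfl, zpow_neg,
    zpow_natCast, zpow_natCast] at htot
  field_simp [hy] at htot
  exact htot

/-- If `q ⊊ p` are primes with `I ⊆ q` and `q` contains no variable, then `p` contains a nonzero
polynomial in `x_0`: the domain `A / q` is integral over `k[x_0]`. -/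
lemma exists_aeval_X_zero_mem {n : ℕ} {k : Type*} [Field k] (a : Fin (n + 1) → Fin (n + 1) → ℕ)
    (hpos : ∀ i j, 0 < a i j) (hsum : ∀ i, a i i = ∑ j ∈ Finset.univ.erase i, a i j)
    (p q : Ideal (MvPolynomial (Fin (n + 1)) k)) [q.IsPrime] (hqp : q ≤ p)
    (hrel : ∀ j, (X j ^ a j j - ∏ i ∈ Finset.univ.erase j, X i ^ a i j :
      MvPolynomial (Fin (n + 1)) k) ∈ q)
    (hX : ∀ i, X i ∉ q) (s : MvPolynomial (Fin (n + 1)) k) (hsp : s ∈ p) (hsq : s ∉ q) :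
    ∃ g : Polynomial k, g ≠ 0 ∧ Polynomial.aeval (X 0 : MvPolynomial (Fin (n + 1)) k) g ∈ p := by
  let D := MvPolynomial (Fin (n + 1)) k ⧸ q
  let π : MvPolynomial (Fin (n + 1)) k →ₐ[k] D := Ideal.Quotient.mkₐ k q
  have hπ : ∀ x, π x = 0 ↔ x ∈ q := fun x => Ideal.Quotient.eq_zero_iff_mem
  let θ : Polynomial k →ₐ[k] D := Polynomial.aeval (π (X 0))
  let : Algebra (Polynomial k) D := θ.toRingHom.toAlgebra
  have halg : ∀ g, algebraMap (Polynomial k) D g = θ g := fun _ => rfl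
  have h0 : IsIntegral (Polynomial k) (π (X 0)) := by
    have : π (X 0) = algebraMap (Polynomial k) D Polynomial.X := by simp [halg, θ]
    rw [this]
    exact isIntegral_algebraMap
  have hXint : ∀ i, IsIntegral (Polynomial k) (π (X i)) := by
    intro i
    refine Fin.cases h0 (fun i => ?_) i
    let ι := algebraMap D (FractionRing D)
    have hι : Function.Injective ι := IsFractionRing.injective D (FractionRing D)
    obtain ⟨δ, w, hδ, hw⟩ := exists_pow_eq_pow a hpos hsum (fun i => ι (π (X i)))
      (fun i h => hX i ((hπ _).mp ((map_eq_zero_iff ι hι).mp h)))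
      (fun j => by
        have := (hπ _).mpr (hrel j)
        rw [map_sub, sub_eq_zero] at this
        simpa using congrArg ι this) i
    simp only [← map_pow] at hw
    have hw' := hι hw
    refine IsIntegral.of_pow hδ ?_
    rw [← map_pow, hw', map_pow]
    exact h0.pow w
  have hπint : ∀ x, IsIntegral (Polynomial k) (π x) := by
    intro x
    induction x using MvPolynomial.induction_on with
    | C r =>
      have : π (C r) = algebraMap (Polynomial k) D (Polynomial.C r) := by
        rw [halg, Polynomial.aeval_C]
        exact π.commutes r
      rw [this]
      exact isIntegral_algebraMap
    | add x y hx hy => rw [map_add]; exact hx.add hy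
    | mul_X x i hx => rw [map_mul]; exact hx.mul (hXint i)
  have hne := Ideal.comap_ne_bot_of_integral_mem (R := Polynomial k) (I := p.map π)
    (x := π s) (fun h => hsq ((hπ s).mp h)) (Ideal.mem_map_of_mem π hsp) (hπint s)
  obtain ⟨g, hg, hg0⟩ := Submodule.exists_mem_ne_zero_of_ne_bot hne
  refine ⟨g, hg0, ?_⟩
  rw [Ideal.mem_comap, halg] at hg
  have hg' : π (Polynomial.aeval (X 0) g) ∈ p.map π := by
    rwa [← Polynomial.aeval_algHom_apply]
  obtain ⟨r, hr, hrg⟩ := (Ideal.mem_map_iff_of_surjective π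
    Ideal.Quotient.mk_surjective).mp hg'
  have : Polynomial.aeval (X 0) g - r ∈ q := by
    rw [← hπ, map_sub, hrg, sub_self]
  simpa using p.add_mem (hqp this) hr

/-- If `x_0` is a nonzerodivisor modulo the PCB ideal `I`, then so is every nonzero polynomial `g`
in `x_0`. For weights `d`, the map `x_i ↦ x_i t ^ d_i` embeds `B = A / I` in `B[t]`, and sends
`g(x_0)` to a polynomial in `t` whose leading coefficient is a scalar times a power of `x_0`. -/
lemma mem_of_aeval_X_zero_mul_mem {n : ℕ} {k : Type*} [Field k]
    (a : Fin (n + 1) → Fin (n + 1) → ℕ)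
    (d : Fin (n + 1) → ℕ) (hd : ∀ i, 0 < d i)
    (hdw : ∀ j, d j * a j j = ∑ i ∈ Finset.univ.erase j, d i * a i j)
    (f : Fin (n + 1) → MvPolynomial (Fin (n + 1)) k)
    (hf : ∀ j, f j = X j ^ a j j - ∏ i ∈ Finset.univ.erase j, X i ^ a i j)
    (I : Ideal (MvPolynomial (Fin (n + 1)) k)) (hI : I = Ideal.span (Set.range f))
    {B : Type*} [CommRing B] [Algebra k B] (π : MvPolynomial (Fin (n + 1)) k →ₐ[k] B)
    (hπs : Function.Surjective π) (hπ : ∀ x, π x = 0 ↔ x ∈ I)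
    (hX : ∀ h, X 0 * h ∈ I → h ∈ I) (g : Polynomial k) (hg : g ≠ 0)
    (h : MvPolynomial (Fin (n + 1)) k) (hgh : Polynomial.aeval (X 0) g * h ∈ I) : h ∈ I := by
  let Φ : MvPolynomial (Fin (n + 1)) k →ₐ[k] Polynomial B :=
    aeval fun i => Polynomial.C (π (X i)) * Polynomial.X ^ d i
  have hΦI : ∀ x ∈ I, Φ x = 0 := by
    suffices I ≤ RingHom.ker Φ from fun x hx => this hx
    rw [hI, Ideal.span_le]
    rintro _ ⟨j, rfl⟩
    have hj : π (X j) ^ a j j = ∏ i ∈ Finset.univ.erase j, π (X i) ^ a i j := by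
      have : π (f j) = 0 := (hπ _).mpr (hI ▸ Ideal.subset_span ⟨j, rfl⟩)
      rw [hf, map_sub, sub_eq_zero] at this
      simpa using this
    rw [SetLike.mem_coe, RingHom.mem_ker, hf]
    simp only [Φ, map_sub, map_pow, map_prod, aeval_X, mul_pow, Finset.prod_mul_distrib, ← pow_mul,
      Finset.prod_pow_eq_pow_sum]
    rw [← hdw j, ← map_pow, hj, map_prod]
    simp
  have hΦ1 : ∀ x, Polynomial.eval 1 (Φ x) = π x := by
    intro x
    induction x using MvPolynomial.induction_on with
    | C r =>
      have : Φ (C r) = Polynomial.C (π (C r)) := by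
        rw [show (C r : MvPolynomial (Fin (n + 1)) k) = algebraMap k _ r from rfl, Φ.commutes,
          π.commutes]
        rfl
      rw [this, Polynomial.eval_C]
    | add x y hx hy => rw [map_add, Polynomial.eval_add, hx, hy, map_add]
    | mul_X x i hx => rw [map_mul, Polynomial.eval_mul, hx, map_mul]; simp [Φ]
  have hX0 : π (X 0) ∈ nonZeroDivisors B := by
    rw [mem_nonZeroDivisors_iff_left]
    intro z hz
    obtain ⟨z, rfl⟩ := hπs z
    have : π (X 0 * z) = 0 := by rw [map_mul]; exact hz
    exact (hπ z).mpr (hX z ((hπ _).mp this))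
  have hpow : ∀ b, Φ (X 0) ^ b = Polynomial.C (π (X 0) ^ b) * Polynomial.X ^ (b * d 0) := by
    intro b
    simp only [Φ, aeval_X, mul_pow, ← pow_mul, map_pow, mul_comm (d 0)]
  -- the coefficient of `t ^ (deg g * d 0)` in the image of `g(x_0)`
  have hcoeff : (Φ (Polynomial.aeval (X 0) g)).coeff (g.natDegree * d 0) =
      algebraMap k B g.leadingCoeff * π (X 0) ^ g.natDegree := by
    rw [← Polynomial.aeval_algHom_apply, Polynomial.aeval_eq_sum_range, Polynomial.finsetSum_coeff,
      Finset.sum_eq_single g.natDegree]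
    · rw [hpow, Polynomial.coeff_smul, Polynomial.coeff_C_mul_X_pow, if_pos rfl,
        Algebra.smul_def, Polynomial.leadingCoeff]
    · intro b _ hb
      have : g.natDegree * d 0 ≠ b * d 0 :=
        fun h => hb (Nat.eq_of_mul_eq_mul_right (hd 0) h).symm
      rw [hpow, Polynomial.coeff_smul, Polynomial.coeff_C_mul_X_pow, if_neg this, smul_zero]
    · simp
  have hnz : Φ (Polynomial.aeval (X 0) g) ∈ nonZeroDivisors (Polynomial B) := by
    refine Polynomial.mem_nonzeroDivisors_of_coeff_mem (g.natDegree * d 0) ?_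
    rw [hcoeff]
    refine mul_mem (IsUnit.mem_nonZeroDivisors ?_) (pow_mem hX0 _)
    exact (IsUnit.mk0 _ (Polynomial.leadingCoeff_ne_zero.mpr hg)).map _
  have hzero : Φ (Polynomial.aeval (X 0) g) * Φ h = 0 := by rw [← map_mul, hΦI _ hgh]
  have hΦh : Φ h = 0 := (mem_nonZeroDivisors_iff_left.mp hnz) _ hzero
  rw [← hπ, ← hΦ1, hΦh, Polynomial.eval_zero]

/-! ### Lattice ideals -/

/-- The monomial `x ^ e`, in the product form used for the generators of a lattice ideal. -/
noncomputable def xpow {m : ℕ} (k : Type*) [Field k] (e : Fin m → ℕ) : MvPolynomial (Fin m) k :=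
  ∏ i, X i ^ e i

lemma xpow_add {m : ℕ} (k : Type*) [Field k] (e e' : Fin m → ℕ) :
    xpow k (e + e') = xpow k e * xpow k e' := by
  simp [xpow, pow_add, Finset.prod_mul_distrib]

lemma monomial_eq_xpow {m : ℕ} {k : Type*} [Field k] (s : Fin m →₀ ℕ) (c : k) :
    monomial s c = c • xpow k s := by
  rw [monomial_eq, xpow, smul_eq_C_mul, Finsupp.prod_fintype _ _ (by simp)]

/-- The generators of the lattice ideal of `𝓛`. -/
def latticeBinomials {m : ℕ} (k : Type*) [Field k] (𝓛 : Submodule ℤ (Fin m → ℤ)) :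
    Set (MvPolynomial (Fin m) k) :=
  {g | ∃ u : Fin m → ℤ, u ∈ 𝓛 ∧ g = ∏ i, X i ^ (u i).toNat - ∏ i, X i ^ (-(u i)).toNat}

/-- Any pair of monomials whose exponents differ by an element `u` is a common monomial multiple
of the pair `x ^ u₊`, `x ^ u₋`. -/
lemma exists_xpow_eq_mul {m : ℕ} (k : Type*) [Field k] (e e' : Fin m → ℕ) (u : Fin m → ℤ)
    (hu : ∀ i, u i = (e i : ℤ) - e' i) :
    ∃ r : Fin m → ℕ, xpow k e - xpow k e' =
      xpow k r * (∏ i, X i ^ (u i).toNat - ∏ i, X i ^ (-(u i)).toNat) := by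
  refine ⟨fun i => min (e i) (e' i), ?_⟩
  have h1 : e = (fun i => min (e i) (e' i)) + fun i => (u i).toNat := by
    ext i; have := hu i; simp only [Pi.add_apply]; omega
  have h2 : e' = (fun i => min (e i) (e' i)) + fun i => (-(u i)).toNat := by
    ext i; have := hu i; simp only [Pi.add_apply]; omega
  have h3 := congrArg (xpow k) h1
  have h4 := congrArg (xpow k) h2
  rw [xpow_add] at h3 h4
  rw [h3, h4, mul_sub]
  rfl

/-- Variables are nonzerodivisors modulo a lattice ideal: it is the kernel of the map from `A` to
the group algebra of `ℤ^m / 𝓛`, where the variables become units. -/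
lemma lattice_saturated {m : ℕ} {k : Type*} [Field k] (𝓛 : Submodule ℤ (Fin m → ℤ))
    (I : Ideal (MvPolynomial (Fin m) k)) (hI : I = Ideal.span (latticeBinomials k 𝓛))
    (i : Fin m) (g : MvPolynomial (Fin m) k) (hg : X i * g ∈ I) : g ∈ I := by
  let G := (Fin m → ℤ) ⧸ 𝓛
  let cl : (Fin m → ℤ) → G := fun u => Submodule.Quotient.mk u
  let φ : MvPolynomial (Fin m) k →ₐ[k] AddMonoidAlgebra k G :=
    aeval fun j => AddMonoidAlgebra.single (cl (Pi.single j 1)) 1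
  have hφ : ∀ e : Fin m → ℕ,
      φ (xpow k e) = AddMonoidAlgebra.single (cl fun j => (e j : ℤ)) 1 := by
    intro e
    have h1 : ∀ s : Finset (Fin m), φ (∏ j ∈ s, X j ^ e j) =
        AddMonoidAlgebra.single (cl (∑ j ∈ s, e j • Pi.single j 1)) 1 := by
      intro s
      induction s using Finset.induction_on with
      | empty => simp [cl]; rfl
      | insert b s hb ih =>
        rw [Finset.prod_insert hb, Finset.sum_insert hb, map_mul, ih, map_pow]
        simp only [φ, aeval_X, AddMonoidAlgebra.single_pow, one_pow,
          AddMonoidAlgebra.single_mul_single, mul_one]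
        rfl
    rw [xpow, h1]
    congr 2
    ext l
    simp [Finset.sum_apply, Pi.single_apply]
  have hIφ : ∀ x ∈ I, φ x = 0 := by
    suffices I ≤ RingHom.ker φ from fun x hx => this hx
    rw [hI, Ideal.span_le]
    rintro _ ⟨u, hu, rfl⟩
    rw [SetLike.mem_coe, RingHom.mem_ker, map_sub, sub_eq_zero]
    refine (hφ _).trans (Eq.trans ?_ (hφ _).symm)
    congr 1
    refine (Submodule.Quotient.eq 𝓛).mpr ?_
    convert hu using 1
    ext l
    simp only [Pi.sub_apply]
    omega
  -- the inverse of the induced map `A / I → k[ℤ^m / 𝓛]` on its image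
  let rep : G → MvPolynomial (Fin m) k ⧸ I := fun c =>
    open Classical in
    if h : ∃ e : Fin m → ℕ, (cl fun j => (e j : ℤ)) = c then Ideal.Quotient.mk I (xpow k h.choose)
    else 0
  have hrep : ∀ e : Fin m → ℕ,
      rep (cl fun j => (e j : ℤ)) = Ideal.Quotient.mk I (xpow k e) := by
    intro e
    have h : ∃ e' : Fin m → ℕ, (cl fun j => (e' j : ℤ)) = cl fun j => (e j : ℤ) := ⟨e, rfl⟩
    simp only [rep]
    rw [dif_pos h, Ideal.Quotient.eq]
    have hmem := (Submodule.Quotient.eq 𝓛).mp h.choose_spec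
    obtain ⟨r, hr⟩ := exists_xpow_eq_mul k h.choose e _ (fun i => rfl)
    rw [hr, hI]
    exact Ideal.mul_mem_left _ _ (Ideal.subset_span ⟨_, hmem, rfl⟩)
  let ψ : (G →₀ k) →ₗ[k] MvPolynomial (Fin m) k ⧸ I := Finsupp.linearCombination k rep
  have hψ : ∀ x, ψ (φ x).coeff = Ideal.Quotient.mk I x := by
    intro x
    induction x using MvPolynomial.induction_on' with
    | monomial s c =>
      rw [monomial_eq_xpow, map_smul, hφ, AddMonoidAlgebra.coeff_smul, map_smul,
        AddMonoidAlgebra.coeff_single]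
      simp only [ψ, Finsupp.linearCombination_single, one_smul]
      rw [hrep]
      rfl
    | add x y hx hy => rw [map_add, AddMonoidAlgebra.coeff_add, map_add, hx, hy, map_add]
  have h0 : φ g = 0 := by
    have h1 := hIφ _ hg
    rw [map_mul] at h1
    have h2 : AddMonoidAlgebra.single (-cl (Pi.single i 1)) (1 : k) * φ (X i) = 1 := by
      simp only [φ, aeval_X, AddMonoidAlgebra.single_mul_single, neg_add_cancel, mul_one]
      rfl
    rw [← one_mul (φ g), ← h2, mul_assoc, h1, mul_zero]
  rw [← Ideal.Quotient.eq_zero_iff_mem, ← hψ, h0]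
  simp

/-- An ideal modulo which all variables are nonzerodivisors is a lattice ideal as soon as it is
generated by differences of monomials: the exponent differences `u` with `x ^ u₊ - x ^ u₋ ∈ I`
form a subgroup. -/
lemma exists_lattice {m : ℕ} {k : Type*} [Field k] (I : Ideal (MvPolynomial (Fin m) k))
    (hsat : ∀ i g, X i * g ∈ I → g ∈ I) (f : Fin m → MvPolynomial (Fin m) k)
    (hf : ∀ j, ∃ e e' : Fin m → ℕ, f j = xpow k e - xpow k e')
    (hI : I = Ideal.span (Set.range f)) :
    ∃ 𝓛 : Submodule ℤ (Fin m → ℤ), I = Ideal.span (latticeBinomials k 𝓛) := by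
  have hpow : ∀ (i : Fin m) (r : ℕ) g, X i ^ r * g ∈ I → g ∈ I := by
    intro i r
    induction r with
    | zero => simp
    | succ r ih => intro g hg; exact ih g (hsat i _ (by rwa [← mul_assoc, ← pow_succ']))
  have hsatx : ∀ (e : Fin m → ℕ) g, xpow k e * g ∈ I → g ∈ I := by
    intro e
    have : ∀ (s : Finset (Fin m)) g, (∏ j ∈ s, X j ^ e j) * g ∈ I → g ∈ I := by
      intro s
      induction s using Finset.induction_on with
      | empty => simp
      | insert b s hb ih =>
        intro g hg
        rw [Finset.prod_insert hb, mul_assoc] at hg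
        exact ih g (hpow _ _ _ hg)
    exact this _
  let P : (Fin m → ℤ) → Prop := fun u =>
    (∏ i, X i ^ (u i).toNat - ∏ i, X i ^ (-(u i)).toNat : MvPolynomial (Fin m) k) ∈ I
  have hP : ∀ (e e' : Fin m → ℕ) (u : Fin m → ℤ), (∀ i, u i = (e i : ℤ) - e' i) →
      (P u ↔ xpow k e - xpow k e' ∈ I) := by
    intro e e' u hu
    obtain ⟨r, hr⟩ := exists_xpow_eq_mul k e e' u hu
    rw [hr]
    exact ⟨fun h => Ideal.mul_mem_left _ _ h, hsatx _ _⟩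
  have hneg : ∀ u, P u → P (-u) := by
    intro u hu
    have := I.neg_mem hu
    simpa [P, neg_sub] using this
  have hadd : ∀ u v, P u → P v → P (u + v) := by
    intro u v hu hv
    rw [hP ((fun i => (u i).toNat) + fun i => (v i).toNat)
      ((fun i => (-(u i)).toNat) + fun i => (-(v i)).toNat) (u + v)
      (by intro i; simp only [Pi.add_apply]; push_cast; omega), xpow_add, xpow_add]
    have h1 := I.mul_mem_right (xpow k fun i => (v i).toNat) hu
    have h2 := I.mul_mem_left (xpow k fun i => (-(u i)).toNat) hv
    convert I.add_mem h1 h2 using 1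
    simp only [xpow]
    ring
  let S : AddSubgroup (Fin m → ℤ) :=
    { carrier := {u | P u}
      zero_mem' := by simp [P]
      add_mem' := fun {u v} hu hv => hadd u v hu hv
      neg_mem' := fun {u} hu => hneg u hu }
  refine ⟨AddSubgroup.toIntSubmodule S, le_antisymm ?_ ?_⟩
  · conv_lhs => rw [hI]
    rw [Ideal.span_le]
    rintro _ ⟨j, rfl⟩
    obtain ⟨e, e', h⟩ := hf j
    have hmem : f j ∈ I := hI ▸ Ideal.subset_span ⟨j, rfl⟩
    obtain ⟨r, hr⟩ := exists_xpow_eq_mul k e e' (fun i => (e i : ℤ) - e' i) fun i => rfl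
    have hPu := (hP e e' (fun i => (e i : ℤ) - e' i) fun i => rfl).mpr (h ▸ hmem)
    rw [h, hr]
    exact Ideal.mul_mem_left _ _ (Ideal.subset_span ⟨_, hPu, rfl⟩)
  · rw [Ideal.span_le]
    rintro _ ⟨u, hu, rfl⟩
    exact hu

/-! ### Primes over the PCB ideal -/

/-- The weights give the prime `ker (x_i ↦ t ^ d_i)`, which contains the PCB ideal, no variable,
and lies in the maximal ideal of the origin. -/
lemma exists_prime_avoiding_X {m : ℕ} {k : Type*} [Field k]
    (a : Fin m → Fin m → ℕ) (d : Fin m → ℕ) (hd : ∀ i, 0 < d i)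
    (hdw : ∀ j, d j * a j j = ∑ i ∈ Finset.univ.erase j, d i * a i j) :
    ∃ q : Ideal (MvPolynomial (Fin m) k), q.IsPrime ∧
      (∀ j, (X j ^ a j j - ∏ i ∈ Finset.univ.erase j, X i ^ a i j : MvPolynomial (Fin m) k) ∈ q) ∧
      (∀ i, X i ∉ q) ∧ ∀ p : Ideal (MvPolynomial (Fin m) k), (∀ i, X i ∈ p) → q ≤ p := by
  let θ : MvPolynomial (Fin m) k →ₐ[k] Polynomial k := aeval fun i => Polynomial.X ^ d i
  refine ⟨RingHom.ker θ, RingHom.ker_isPrime θ, fun j => ?_, fun i hi => ?_, fun p hp x hx => ?_⟩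
  · rw [RingHom.mem_ker]
    simp only [θ, map_sub, map_pow, map_prod, aeval_X, ← pow_mul, Finset.prod_pow_eq_pow_sum]
    rw [hdw j, sub_self]
  · rw [RingHom.mem_ker] at hi
    simp [θ] at hi
  · have hsub : ∀ x : MvPolynomial (Fin m) k, x - C (Polynomial.eval 0 (θ x)) ∈ p := by
      intro x
      induction x using MvPolynomial.induction_on with
      | C r => simp [θ]
      | add x y hx hy =>
        convert p.add_mem hx hy using 1
        simp only [map_add, Polynomial.eval_add]
        ring
      | mul_X x i _ =>
        have : Polynomial.eval 0 (θ (x * X i)) = 0 := by simp [θ, (hd i).ne']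
        rw [this, map_zero, sub_zero]
        exact p.mul_mem_left _ (hp i)
    have h := hsub x
    rw [RingHom.mem_ker] at hx
    simpa [hx] using h

/-- A prime containing the PCB relations and one variable contains all variables. -/
lemma X_mem_of_X_mem {m : ℕ} {k : Type*} [Field k]
    (a : Fin m → Fin m → ℕ) (hpos : ∀ i j, 0 < a i j)
    (p : Ideal (MvPolynomial (Fin m) k)) [hp : p.IsPrime]
    (hrel : ∀ j, (X j ^ a j j - ∏ i ∈ Finset.univ.erase j, X i ^ a i j :
      MvPolynomial (Fin m) k) ∈ p) (i : Fin m) (hi : X i ∈ p) (j : Fin m) : X j ∈ p := by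
  by_cases hij : i = j
  · exact hij ▸ hi
  have hprod : (∏ i ∈ Finset.univ.erase j, X i ^ a i j : MvPolynomial (Fin m) k) ∈ p :=
    p.mem_of_dvd (Finset.dvd_prod_of_mem _ (Finset.mem_erase.mpr ⟨hij, Finset.mem_univ i⟩))
      (p.pow_mem_of_mem hi _ (hpos i j))
  have := p.add_mem (hrel j) hprod
  rw [sub_add_cancel] at this
  exact hp.mem_of_pow_mem _ this

/-- The PCB ideal `I` in `A = k[x_0, …, x_n]` is unmixed (every
associated prime is a minimal prime) if and only if `I` is a lattice ideal, i.e.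
there is a subgroup (ℤ-submodule) `𝓛 ⊆ ℤ^{n+1}` such that `I` is generated by the
binomials `x^{u₊} − x^{u₋}` for `u ∈ 𝓛`. -/
theorem stmt13 {n : ℕ} (hn : 1 ≤ n) (k : Type*) [Field k]
    (a : Fin (n + 1) → Fin (n + 1) → ℕ) (hpos : ∀ i j, 0 < a i j)
    (hsum : ∀ i, a i i = ∑ j ∈ Finset.univ.erase i, a i j)
    (f : Fin (n + 1) → MvPolynomial (Fin (n + 1)) k)
    (hf : ∀ j, f j = X j ^ a j j - ∏ i ∈ Finset.univ.erase j, X i ^ a i j)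
    (I : Ideal (MvPolynomial (Fin (n + 1)) k)) (hI : I = Ideal.span (Set.range f)) :
    (∀ p ∈ associatedPrimes (MvPolynomial (Fin (n + 1)) k)
        (MvPolynomial (Fin (n + 1)) k ⧸ I), p ∈ I.minimalPrimes) ↔
      ∃ 𝓛 : Submodule ℤ (Fin (n + 1) → ℤ),
        I = Ideal.span {g : MvPolynomial (Fin (n + 1)) k | ∃ u : Fin (n + 1) → ℤ,
          u ∈ 𝓛 ∧ g = ∏ i, X i ^ (u i).toNat - ∏ i, X i ^ (-(u i)).toNat} := by
  have hrel : ∀ j, (X j ^ a j j - ∏ i ∈ Finset.univ.erase j, X i ^ a i j :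
      MvPolynomial (Fin (n + 1)) k) ∈ I := fun j => by
    rw [← hf, hI]
    exact Ideal.subset_span ⟨j, rfl⟩
  obtain ⟨d, hd, hdw⟩ := exists_weights a hpos hsum
  constructor
  · intro hass
    refine exists_lattice I (fun i g hg => ?_) f (fun j => ?_) hI
    · by_contra hgI
      have hmem : (X i : MvPolynomial (Fin (n + 1)) k) ∈
          ⋃ p ∈ associatedPrimes (MvPolynomial (Fin (n + 1)) k)
            (MvPolynomial (Fin (n + 1)) k ⧸ I), (p : Set (MvPolynomial (Fin (n + 1)) k)) := by
        rw [biUnion_associatedPrimes_eq_zero_divisors]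
        exact ⟨Ideal.Quotient.mk I g, fun h => hgI (Ideal.Quotient.eq_zero_iff_mem.mp h),
          Ideal.Quotient.eq_zero_iff_mem.mpr hg⟩
      simp only [Set.mem_iUnion] at hmem
      obtain ⟨p, hpass, hip⟩ := hmem
      have hmin := hass p hpass
      have hpp : p.IsPrime := hmin.1.1
      obtain ⟨q, hq, hqrel, hqX, hqp⟩ := exists_prime_avoiding_X (k := k) a d hd hdw
      have hIq : I ≤ q := by
        rw [hI, Ideal.span_le]
        rintro _ ⟨j, rfl⟩
        rw [hf]
        exact hqrel j
      have hle := hmin.2 ⟨hq, hIq⟩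
        (hqp p (X_mem_of_X_mem a hpos p (fun j => hmin.1.2 (hrel j)) i hip))
      exact hqX i (hle hip)
    · refine ⟨Pi.single j (a j j), Function.update (fun i => a i j) j 0, ?_⟩
      have h1 : xpow k (Pi.single j (a j j)) = X j ^ a j j := by
        rw [xpow, Finset.prod_eq_single j (fun b _ hb => by simp [hb]) (by simp),
          Pi.single_eq_same]
      have h2 : xpow k (Function.update (fun i => a i j) j 0) =
          ∏ i ∈ Finset.univ.erase j, X i ^ a i j := by
        rw [xpow, ← Finset.mul_prod_erase _ _ (Finset.mem_univ j), Function.update_self, pow_zero,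
          one_mul]
        refine Finset.prod_congr rfl fun i hi => ?_
        rw [Function.update_of_ne (Finset.ne_of_mem_erase hi)]
      rw [hf, h1, h2]
  · rintro ⟨𝓛, h𝓛⟩ p hpass
    have hsat : ∀ i g, X i * g ∈ I → g ∈ I := lattice_saturated 𝓛 I h𝓛
    rw [AssociatedPrimes.mem_iff, isAssociatedPrime_iff] at hpass
    obtain ⟨hpp, x, hpx⟩ := hpass
    obtain ⟨h, rfl⟩ := Ideal.Quotient.mk_surjective x
    have hp : ∀ r, r ∈ p ↔ r * h ∈ I := by
      intro r
      rw [hpx, Submodule.mem_colon_singleton, Submodule.mem_bot,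
        ← Ideal.Quotient.eq_zero_iff_mem]
      rfl
    have hhI : h ∉ I := fun hh => hpp.ne_top ((Ideal.eq_top_iff_one p).mpr ((hp 1).mpr (by simpa)))
    have hIp : I ≤ p := fun r hr => (hp r).mpr (I.mul_mem_right h hr)
    refine ⟨⟨hpp, hIp⟩, fun q hq hqp s hsp => ?_⟩
    by_contra hsq
    have hqprime : q.IsPrime := hq.1
    obtain ⟨g, hg0, hgp⟩ := exists_aeval_X_zero_mem a hpos hsum p q hqp
      (fun j => hq.2 (hrel j)) (fun i hi => hhI (hsat i h ((hp _).mp (hqp hi)))) s hsp hsq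
    exact hhI (mem_of_aeval_X_zero_mul_mem a d hd hdw f hf I hI (Ideal.Quotient.mkₐ k I)
      Ideal.Quotient.mk_surjective (fun x => Ideal.Quotient.eq_zero_iff_mem) (hsat 0) g hg0 h
      ((hp _).mp hgp))
end

section
/- Suppose n ≥ 4. Set g_1 = x_2^{a_{2,1}} x_3^{a_{3,1}} ⋯ x_{n−1}^{a_{n−1,1}}, g_2 = x_2^{a_{2,n}} x_3^{a_{3,n}} ⋯ x_{n−1}^{a_{n−1,n}}, and g = x_1^{a_{1,1}−1} x_n^{a_{n,n}−a_{n,1}} − x_1^{a_{1,n}−1} g_1 g_2. Then x_1 g ∈ I but g ∉ I; in particular, x_1 is a zerodivisor on A/I and the PCB ideal I is not unmixed. -/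
open MvPolynomial

/-!
Membership `x₀ g ∈ I` is the identity `x₀ g = xₙ^(aₙₙ - aₙ₀) f₀ + g₁ fₙ`.

For `g ∉ I`, let `J` be the monomial ideal generated by `x₀^a₀₀`, `xₙ^aₙₙ` and the middle variables.
As there are at least two middle variables, both terms of every `f_j` lie in `J`, and so does
`g₁`; but `x₀^(a₀₀-1) xₙ^(aₙₙ-aₙ₀)` does not (`monomial_not_mem_span`).

Hence `x₀` lies in some associated prime `p` of `A/I`. Modulo `x₀` each `f_j` with `j ≠ 0` becomes
`x_j^(a_jj)`, so `p` contains every variable. On the other hand the PCB matrix has a strictly positive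
integer vector `w` in its left kernel (`exists_pos_weight`), so `I` is contained in the kernel
of `x_i ↦ T^(w_i)`, a prime strictly smaller than the maximal ideal `(x₀, …, xₙ)`; therefore `p` is
not minimal over `I` (`not_mem_minimalPrimes`).
-/

/-- The left kernel of a PCB matrix contains a strictly positive integer vector: the matrix is
singular because its rows sum to zero, and taking absolute values of a left kernel vector gives
column inequalities whose total is an equality, so each of them is an equality. -/
lemma exists_pos_weight {ι : Type*} [Fintype ι] [DecidableEq ι] [Nonempty ι]
    (a : ι → ι → ℕ) (hpos : ∀ i j, 0 < a i j)
    (hsum : ∀ i, a i i = ∑ j ∈ Finset.univ.erase i, a i j) :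
    ∃ w : ι → ℕ, (∀ i, 0 < w i) ∧
      ∀ j, w j * a j j = ∑ i ∈ Finset.univ.erase j, w i * a i j := by
  let L : Matrix ι ι ℤ := Matrix.of fun i j => if i = j then (a i i : ℤ) else -(a i j : ℤ)
  have hdet : L.det = 0 := by
    rw [← Matrix.exists_mulVec_eq_zero_iff]
    refine ⟨fun _ => 1, fun h => ?_, ?_⟩
    · simpa using congrFun h (Classical.arbitrary ι)
    · funext i
      simp only [Matrix.mulVec, dotProduct, mul_one, Pi.zero_apply]
      rw [← Finset.add_sum_erase _ _ (Finset.mem_univ i),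
        Finset.sum_congr rfl (g := fun j => -(a i j : ℤ))]
      · simp only [L, Matrix.of_apply, if_true, Finset.sum_neg_distrib]
        rw [hsum i, Nat.cast_sum, add_neg_cancel]
      · intro j hj
        simp [L, (Finset.ne_of_mem_erase hj).symm]
  obtain ⟨v, hv0, hv⟩ := Matrix.exists_vecMul_eq_zero_iff.2 hdet
  have hcol : ∀ j, v j * a j j = ∑ i ∈ Finset.univ.erase j, v i * a i j := by
    intro j
    have h := congrFun hv j
    simp only [Matrix.vecMul, dotProduct, Pi.zero_apply] at h
    rw [← Finset.add_sum_erase _ _ (Finset.mem_univ j),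
      Finset.sum_congr rfl (g := fun i => -(v i * a i j : ℤ))] at h
    · simp only [L, Matrix.of_apply, if_true, Finset.sum_neg_distrib] at h
      linarith
    · intro i hi
      simp [L, Finset.ne_of_mem_erase hi]
  have hle : ∀ j ∈ Finset.univ,
      (v j).natAbs * a j j ≤ ∑ i ∈ Finset.univ.erase j, (v i).natAbs * a i j := by
    intro j _
    have h := Finset.abs_sum_le_sum_abs (fun i => v i * (a i j : ℤ)) (Finset.univ.erase j)
    rw [← hcol j] at h
    simp only [abs_mul, Nat.abs_cast] at h
    zify
    exact h
  have htot : ∑ j, (v j).natAbs * a j j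
      = ∑ j, ∑ i ∈ Finset.univ.erase j, (v i).natAbs * a i j := by
    rw [Finset.sum_comm' (t' := Finset.univ) (s' := fun i => Finset.univ.erase i)]
    · refine Finset.sum_congr rfl fun i _ => ?_
      rw [hsum i, Finset.mul_sum]
    · intro x y
      simp [ne_comm]
  have heq := (Finset.sum_eq_sum_iff_of_le hle).1 htot
  refine ⟨fun i => (v i).natAbs, fun j => ?_, fun j => heq j (Finset.mem_univ j)⟩
  by_contra hj
  have hj0 : (v j).natAbs = 0 := Nat.eq_zero_of_not_pos hj
  apply hv0
  funext i
  by_cases hij : i = j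
  · subst hij
    simpa using hj0
  · have h := heq j (Finset.mem_univ j)
    rw [hj0, zero_mul, eq_comm, Finset.sum_eq_zero_iff] at h
    have h2 := h i (Finset.mem_erase.2 ⟨hij, Finset.mem_univ i⟩)
    simpa [(hpos i j).ne'] using h2

/-- An ideal containing all the variables is not minimal over a PCB ideal: the kernel of the
monomial curve parametrization `x_i ↦ T^(w_i)` is a strictly smaller prime containing the ideal. -/
lemma not_mem_minimalPrimes {ι : Type*} [Fintype ι] [DecidableEq ι] [Nonempty ι]
    (k : Type*) [Field k] (a : ι → ι → ℕ) (hpos : ∀ i j, 0 < a i j)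
    (hsum : ∀ i, a i i = ∑ j ∈ Finset.univ.erase i, a i j)
    (p : Ideal (MvPolynomial ι k)) (hp : ∀ i, X i ∈ p) :
    p ∉ (Ideal.span (Set.range fun j : ι =>
      (X j ^ a j j - ∏ i ∈ Finset.univ.erase j, X i ^ a i j :
        MvPolynomial ι k))).minimalPrimes := by
  intro hmin
  obtain ⟨w, hw, hwa⟩ := exists_pos_weight a hpos hsum
  let φ : MvPolynomial ι k →ₐ[k] Polynomial k := aeval fun i => (Polynomial.X : Polynomial k) ^ w i
  have hφX : ∀ i, φ (X i) = Polynomial.X ^ w i := fun i => by simp [φ]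
  have hIQ : Ideal.span (Set.range fun j : ι =>
      (X j ^ a j j - ∏ i ∈ Finset.univ.erase j, X i ^ a i j : MvPolynomial ι k))
        ≤ RingHom.ker φ := by
    rw [Ideal.span_le]
    rintro _ ⟨j, rfl⟩
    simp only [SetLike.mem_coe, RingHom.mem_ker, map_sub, map_pow, map_prod, hφX, ← pow_mul,
      Finset.prod_pow_eq_pow_sum, hwa j, sub_self]
  have hQp : RingHom.ker φ ≤ p := by
    intro q hq
    -- Evaluating `T` at `0` shows that elements of the kernel have no constant term.
    have hc : constantCoeff q = 0 := by
      have h : (Polynomial.aeval (0 : k)).comp φ = aeval fun _ => (0 : k) := by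
        ext i
        simp [hφX, (hw i).ne']
      have h2 := DFunLike.congr_fun h q
      rw [AlgHom.comp_apply, (RingHom.mem_ker).1 hq, map_zero] at h2
      have h3 := (aeval_zero (S₁ := k) q)
      rw [show (0 : ι → k) = fun _ => 0 from rfl, ← h2] at h3
      simpa using h3.symm
    have hspan : q ∈ Ideal.span (X '' (Set.univ : Set ι) : Set (MvPolynomial ι k)) := by
      rw [mem_ideal_span_X_image]
      intro m hm
      by_contra hcon
      push Not at hcon
      have hm0 : m = 0 := by
        ext i
        simpa using hcon i (Set.mem_univ i)
      subst hm0
      exact (mem_support_iff.1 hm) hc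
    refine (Ideal.span_le.2 ?_) hspan
    rintro _ ⟨i, -, rfl⟩
    exact hp i
  have hX := hmin.2 ⟨RingHom.ker_isPrime φ, hIQ⟩ hQp (hp (Classical.arbitrary ι))
  rw [RingHom.mem_ker, hφX] at hX
  exact pow_ne_zero _ Polynomial.X_ne_zero hX

/-- For `b < c` and `e < d` the monomial `x_s^b x_t^e` avoids the monomial ideal generated by
`x_s^c`, `x_t^d` and all the other variables, since no generator divides it. -/
lemma monomial_not_mem_span {ι k : Type*} [DecidableEq ι] [Field k] {s t : ι} (hst : s ≠ t)
    {b c d e : ℕ} (hbc : b < c) (hed : e < d) :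
    (X s ^ b * X t ^ e : MvPolynomial ι k) ∉
      Ideal.span ((fun u => monomial u (1 : k)) ''
        ({Finsupp.single s c, Finsupp.single t d} ∪
          {u | ∃ i, i ≠ s ∧ i ≠ t ∧ u = Finsupp.single i 1})) := by
  intro h
  rw [mem_ideal_span_monomial_image] at h
  have hmon : (X s ^ b * X t ^ e : MvPolynomial ι k)
      = monomial (Finsupp.single s b + Finsupp.single t e) 1 := by
    rw [X_pow_eq_monomial, X_pow_eq_monomial, monomial_mul, one_mul]
  obtain ⟨u, hu, hle⟩ := h (Finsupp.single s b + Finsupp.single t e) (by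
    rw [hmon, mem_support_iff, coeff_monomial]
    simp)
  rcases hu with (rfl | rfl) | ⟨i, his, hit, rfl⟩
  · have h1 := hle s
    simp [hst] at h1
    omega
  · have h1 := hle t
    simp [hst] at h1
    omega
  · have h1 := hle i
    simp [his, hit] at h1

/-- Suppose the number of variables `n + 1` is at least `4`
(i.e. `3 ≤ n`).  With `g₁ = ∏_{0 < i < n} x_i^{a i 0}`, `g₂ = ∏_{0 < i < n} x_i^{a i n}`
(products over the middle indices) and
`g = x_0^{a₀₀ − 1} x_n^{aₙₙ − aₙ₀} − x_0^{a₀ₙ − 1} g₁ g₂`, one has `x_0 · g ∈ I` but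
`g ∉ I`; in particular `x_0` is a zerodivisor on `A/I` and the PCB ideal `I` is not
unmixed. -/
theorem stmt14 {n : ℕ} (hn : 3 ≤ n) (k : Type*) [Field k]
    (a : Fin (n + 1) → Fin (n + 1) → ℕ) (hpos : ∀ i j, 0 < a i j)
    (hsum : ∀ i, a i i = ∑ j ∈ Finset.univ.erase i, a i j)
    (f : Fin (n + 1) → MvPolynomial (Fin (n + 1)) k)
    (hf : ∀ j, f j = X j ^ a j j - ∏ i ∈ Finset.univ.erase j, X i ^ a i j)
    (I : Ideal (MvPolynomial (Fin (n + 1)) k)) (hI : I = Ideal.span (Set.range f))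
    (g₁ g₂ g : MvPolynomial (Fin (n + 1)) k)
    (hg₁ : g₁ = ∏ i ∈ (Finset.univ.erase 0).erase (Fin.last n), X i ^ a i 0)
    (hg₂ : g₂ = ∏ i ∈ (Finset.univ.erase 0).erase (Fin.last n), X i ^ a i (Fin.last n))
    (hg : g = X 0 ^ (a 0 0 - 1) * X (Fin.last n) ^ (a (Fin.last n) (Fin.last n)
            - a (Fin.last n) 0)
        - X 0 ^ (a 0 (Fin.last n) - 1) * g₁ * g₂) :
    X 0 * g ∈ I ∧ g ∉ I ∧
      ¬ (∀ p ∈ associatedPrimes (MvPolynomial (Fin (n + 1)) k)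
          (MvPolynomial (Fin (n + 1)) k ⧸ I), p ∈ I.minimalPrimes) := by
  have h0n : (0 : Fin (n + 1)) ≠ Fin.last n := by
    intro h
    have := congrArg Fin.val h
    simp at this
    omega
  set l : Fin (n + 1) := Fin.last n with hl
  have hle : a l 0 ≤ a l l := by
    rw [hsum l]
    exact Finset.single_le_sum (f := fun j => a l j) (fun _ _ => Nat.zero_le _)
      (Finset.mem_erase.2 ⟨h0n, Finset.mem_univ _⟩)
  have hfI : ∀ j, f j ∈ I := fun j => hI ▸ Ideal.subset_span ⟨j, rfl⟩
  have hf0 : f 0 = X 0 ^ a 0 0 - X l ^ a l 0 * g₁ := by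
    rw [hf, hg₁, Finset.mul_prod_erase _ (fun i => (X i ^ a i 0 : MvPolynomial (Fin (n + 1)) k))
      (Finset.mem_erase.2 ⟨h0n.symm, Finset.mem_univ _⟩)]
  have hfl : f l = X l ^ a l l - X 0 ^ a 0 l * g₂ := by
    rw [hf, hg₂, Finset.erase_right_comm,
      Finset.mul_prod_erase _ (fun i => (X i ^ a i l : MvPolynomial (Fin (n + 1)) k))
      (Finset.mem_erase.2 ⟨h0n, Finset.mem_univ _⟩)]
  have hmem : X 0 * g ∈ I := by
    have h : X 0 * g = X l ^ (a l l - a l 0) * f 0 + g₁ * f l := by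
      obtain ⟨b, hb⟩ := Nat.exists_eq_succ_of_ne_zero (hpos 0 0).ne'
      obtain ⟨c, hc⟩ := Nat.exists_eq_succ_of_ne_zero (hpos 0 l).ne'
      obtain ⟨d, hd⟩ := Nat.exists_eq_add_of_le hle
      rw [hf0, hfl, hg, hb, hc, hd]
      simp only [Nat.succ_eq_add_one, Nat.add_sub_cancel, Nat.add_sub_cancel_left]
      ring
    rw [h]
    exact I.add_mem (I.mul_mem_left _ (hfI 0)) (I.mul_mem_left _ (hfI l))
  -- Every index `j` misses some middle index, because there are at least two of those.
  have hmid : ∀ j : Fin (n + 1), ∃ i, i ≠ j ∧ i ≠ 0 ∧ i ≠ l := by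
    intro j
    by_cases hj : j.val = 1
    · refine ⟨⟨2, by omega⟩, ?_, ?_, ?_⟩ <;>
      · intro h
        have := congrArg Fin.val h
        simp [hl] at this
        try omega
    · refine ⟨⟨1, by omega⟩, ?_, ?_, ?_⟩ <;>
      · intro h
        have := congrArg Fin.val h
        simp [hl] at this
        try omega
  have hnot : g ∉ I := by
    intro hgI
    set J : Ideal (MvPolynomial (Fin (n + 1)) k) :=
      Ideal.span ((fun u => monomial u (1 : k)) ''
        ({Finsupp.single 0 (a 0 0), Finsupp.single l (a l l)} ∪
          {u | ∃ i, i ≠ 0 ∧ i ≠ l ∧ u = Finsupp.single i 1})) with hJ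
    have hXJ : ∀ i, i ≠ 0 → i ≠ l → (X i : MvPolynomial (Fin (n + 1)) k) ∈ J := fun i h1 h2 =>
      Ideal.subset_span ⟨Finsupp.single i 1, Or.inr ⟨i, h1, h2, rfl⟩, rfl⟩
    have hprod : ∀ (S : Finset (Fin (n + 1))) (e : Fin (n + 1) → ℕ) (i : Fin (n + 1)), i ∈ S →
        i ≠ 0 → i ≠ l → 0 < e i → (∏ i ∈ S, X i ^ e i : MvPolynomial (Fin (n + 1)) k) ∈ J :=
      fun S e i hi h0 h1 he => Ideal.mem_of_dvd J
        (Finset.dvd_prod_of_mem (fun i => (X i ^ e i : MvPolynomial (Fin (n + 1)) k)) hi)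
        (Ideal.pow_mem_of_mem J (hXJ i h0 h1) _ he)
    have hIJ : I ≤ J := by
      rw [hI, Ideal.span_le]
      rintro _ ⟨j, rfl⟩
      rw [hf]
      refine J.sub_mem ?_ ?_
      · by_cases h0 : j = 0
        · subst h0
          exact Ideal.subset_span ⟨_, Or.inl (Or.inl rfl), (X_pow_eq_monomial ..).symm⟩
        · by_cases h1 : j = l
          · rw [h1]
            exact Ideal.subset_span ⟨_, Or.inl (Or.inr rfl), (X_pow_eq_monomial ..).symm⟩
          · exact Ideal.pow_mem_of_mem J (hXJ j h0 h1) _ (hpos j j)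
      · obtain ⟨i, hij, hi0, hi1⟩ := hmid j
        exact hprod _ (fun i => a i j) i (Finset.mem_erase.2 ⟨hij, Finset.mem_univ _⟩) hi0 hi1
          (hpos i j)
    have hg₁J : g₁ ∈ J := by
      obtain ⟨i, -, hi0, hi1⟩ := hmid 0
      rw [hg₁]
      exact hprod _ (fun i => a i 0) i (by simp [hi0, hi1]) hi0 hi1 (hpos i 0)
    have hmon : (X 0 ^ (a 0 0 - 1) * X l ^ (a l l - a l 0) : MvPolynomial (Fin (n + 1)) k) ∈ J := by
      have h := J.add_mem (hIJ hgI)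
        (J.mul_mem_right g₂ (J.mul_mem_left (X 0 ^ (a 0 l - 1)) hg₁J))
      rwa [hg, sub_add_cancel] at h
    have := hpos 0 0
    have := hpos l 0
    exact monomial_not_mem_span h0n (by omega) (by omega) hmon
  refine ⟨hmem, hnot, fun hall => ?_⟩
  obtain ⟨p, hpass, hpg⟩ := exists_le_isAssociatedPrime_of_isNoetherianRing
    (MvPolynomial (Fin (n + 1)) k) (Ideal.Quotient.mk I g)
    (fun h => hnot (Ideal.Quotient.eq_zero_iff_mem.1 h))
  have hpmin := hall p hpass
  have hpI : I ≤ p := hpmin.1.2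
  have hpp : p.IsPrime := hpmin.1.1
  have hX0 : X 0 ∈ p := by
    apply hpg
    rw [Submodule.mem_colon_singleton, Submodule.mem_bot]
    exact Ideal.Quotient.eq_zero_iff_mem.2 hmem
  have hXp : ∀ j, X j ∈ p := by
    intro j
    by_cases hj : j = 0
    · rw [hj]
      exact hX0
    · have h1 := hpI (hfI j)
      have h2 : (∏ i ∈ Finset.univ.erase j, X i ^ a i j : MvPolynomial (Fin (n + 1)) k) ∈ p :=
        Ideal.mem_of_dvd p (Finset.dvd_prod_of_mem
          (fun i => (X i ^ a i j : MvPolynomial (Fin (n + 1)) k))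
          (Finset.mem_erase.2 ⟨Ne.symm hj, Finset.mem_univ _⟩))
          (Ideal.pow_mem_of_mem p hX0 _ (hpos 0 j))
      have h3 := p.add_mem h1 h2
      rw [hf, sub_add_cancel] at h3
      exact hpp.mem_of_pow_mem _ h3
  refine not_mem_minimalPrimes k a hpos hsum p hXp ?_
  rw [hI, funext hf] at hpmin
  exact hpmin
end

section
/- Let L be an n×n positive critical binomial matrix with a normal (Smith) decomposition PLQ = D with invariant factors d_1,…,d_{n−1}. Then d_1 ⋯ d_{n−1} = d, where d is the greatest common divisor of the entries of the last row m(I) of adj(L); moreover the last row of P equals ν(I) or −ν(I), where ν(I) = m(I)/d. -/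
/-!
Taking adjugates in `P L Q = D` gives `det P * det Q * adj L = Q * adj D * P`, and `adj D` has a
single nonzero entry, the product `d_1 ⋯ d_n` in the last diagonal position. Hence the last row
of `adj L` is `± Q_{last,last} * (d_1 ⋯ d_n)` times the last row of `P`
(`adjugate_last_row`).

The vector `1 = (1,…,1)` lies in `ker L`, so `Q⁻¹ 1` lies in `ker D`, which is spanned by the last
basis vector because the `d_i` are nonzero. Thus `1` is an integer multiple of the last column of
`Q`, and `Q_{last,last}` is a unit (`isUnit_last_last`). Finally, a row of the unimodular matrix
`P` has gcd one (`gcd_row_eq_one`), so the gcd of the last row of `adj L` is `d_1 ⋯ d_n`.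
-/

open Matrix in
/-- The only nonzero entry of the adjugate of `diag(d_1, …, d_n, 0)` is the last diagonal one. -/
lemma adjugate_diagonal_snoc {n : ℕ} (dv : Fin n → ℤ) :
    (diagonal (Fin.snoc dv 0 : Fin (n + 1) → ℤ)).adjugate =
      diagonal (Pi.single (Fin.last n) (∏ i, dv i)) := by
  rw [adjugate_diagonal]
  congr 1
  funext i
  induction i using Fin.lastCases with
  | last =>
    rw [Pi.single_eq_same, ← Finset.compl_singleton, ← Fin.image_castSucc,
      Finset.prod_image (fun _ _ _ _ h => Fin.castSucc_injective n h)]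
    simp
  | cast i =>
    rw [Pi.single_eq_of_ne (Fin.castSucc_lt_last i).ne]
    exact Finset.prod_eq_zero (i := Fin.last n)
      (Finset.mem_erase.2 ⟨(Fin.castSucc_lt_last i).ne', Finset.mem_univ _⟩) (by simp)

open Matrix in
lemma adjugate_last_row {n : ℕ} (L P Q : Matrix (Fin (n + 1)) (Fin (n + 1)) ℤ) (dv : Fin n → ℤ)
    (hD : P * L * Q = diagonal (Fin.snoc dv 0)) (i : Fin (n + 1)) :
    P.det * Q.det * L.adjugate (Fin.last n) i =
      Q (Fin.last n) (Fin.last n) * (∏ k, dv k) * P (Fin.last n) i := by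
  have h : (P.det * Q.det) • L.adjugate =
      Q * diagonal (Pi.single (Fin.last n) (∏ i, dv i)) * P := by
    rw [← adjugate_diagonal_snoc, ← hD, adjugate_mul_distrib, adjugate_mul_distrib]
    calc (P.det * Q.det) • L.adjugate = (Q.det • 1) * L.adjugate * (P.det • 1) := by
          rw [smul_mul_assoc, one_mul, mul_smul_comm, mul_one, smul_smul]
      _ = (Q * Q.adjugate) * L.adjugate * (P.adjugate * P) := by
          rw [mul_adjugate, adjugate_mul]
      _ = _ := by simp only [Matrix.mul_assoc]
  have h' := congrFun (congrFun h (Fin.last n)) i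
  rw [Matrix.smul_apply, smul_eq_mul, Matrix.mul_apply,
    Finset.sum_eq_single (Fin.last n)] at h'
  · simpa [mul_diagonal] using h'
  · intro k _ hk
    simp [mul_diagonal, hk]
  · simp

open Matrix in
/-- The all-ones vector is a multiple of the last column of `Q`, so the entries of that column
are units; only the last one is needed. -/
lemma isUnit_last_last {n : ℕ} (L P Q : Matrix (Fin (n + 1)) (Fin (n + 1)) ℤ) (dv : Fin n → ℤ)
    (hQ : IsUnit Q.det) (hdv : ∀ i, dv i ≠ 0) (hL : L *ᵥ 1 = 0)
    (hD : P * L * Q = diagonal (Fin.snoc dv 0)) :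
    IsUnit (Q (Fin.last n) (Fin.last n)) := by
  set w : Fin (n + 1) → ℤ := Q⁻¹ *ᵥ 1 with hw
  have hQw : Q *ᵥ w = 1 := by
    rw [hw, mulVec_mulVec, mul_nonsing_inv _ hQ, one_mulVec]
  have hDw : diagonal (Fin.snoc dv 0 : Fin (n + 1) → ℤ) *ᵥ w = 0 := by
    rw [← hD, ← mulVec_mulVec, hQw, ← mulVec_mulVec, hL, mulVec_zero]
  have hw0 : ∀ i : Fin n, w i.castSucc = 0 := by
    intro i
    have := congrFun hDw i.castSucc
    rw [mulVec_diagonal] at this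
    simpa [hdv i] using this
  have h1 := congrFun hQw (Fin.last n)
  rw [mulVec, dotProduct, Fin.sum_univ_castSucc] at h1
  simp only [hw0, mul_zero, Finset.sum_const_zero, zero_add, Pi.one_apply] at h1
  exact IsUnit.of_mul_eq_one _ h1

lemma gcd_row_eq_one {m : ℕ} (P : Matrix (Fin m) (Fin m) ℤ) (hP : IsUnit P.det) (r : Fin m) :
    Finset.univ.gcd (fun i => P r i) = 1 := by
  have hdvd : Finset.univ.gcd (fun i => P r i) ∣ P.det := by
    have h := congrFun (congrFun (Matrix.mul_adjugate P) r) r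
    simp only [Matrix.smul_apply, Matrix.one_apply_eq, smul_eq_mul, mul_one] at h
    rw [← h, Matrix.mul_apply]
    exact Finset.dvd_sum fun i hi => (Finset.gcd_dvd hi).mul_right _
  rw [← Finset.normalize_gcd]
  exact normalize_eq_one.2 (isUnit_of_dvd_unit hdvd hP)

/-- Let `L` be an `(n+1)×(n+1)` PCB matrix and `P L Q = D` a normal
(Smith) decomposition: `P, Q` are integer matrices of unit determinant and
`D = diag(d_1, …, d_n, 0)` with positive invariant factors `d_i` satisfying
`d_i ∣ d_j` for `i ≤ j`.  Then `d_1 ⋯ d_n = d`, the gcd of the entries of the last row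
`m(I)` of `adj(L)`; and the last row of `P` equals `ν(I)` or `−ν(I)`, where
`ν(I) = m(I)/d` (expressed here as `d · (last row of P) = ± m(I)`). -/
theorem stmt16 {n : ℕ} (hn : 1 ≤ n)
    (a : Fin (n + 1) → Fin (n + 1) → ℕ) (hpos : ∀ i j, 0 < a i j)
    (hsum : ∀ i, a i i = ∑ j ∈ Finset.univ.erase i, a i j)
    (L : Matrix (Fin (n + 1)) (Fin (n + 1)) ℤ)
    (hL : ∀ i j, L i j = if i = j then (a i i : ℤ) else -(a i j : ℤ))
    (P Q : Matrix (Fin (n + 1)) (Fin (n + 1)) ℤ)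
    (hP : IsUnit P.det) (hQ : IsUnit Q.det)
    (dv : Fin n → ℤ) (hdpos : ∀ i, 0 < dv i)
    (hdvd : ∀ i j : Fin n, i ≤ j → dv i ∣ dv j)
    (hD : P * L * Q = Matrix.diagonal (Fin.snoc dv 0)) :
    (∏ i, dv i) = Finset.univ.gcd (fun i => L.adjugate (Fin.last n) i) ∧
      ((∀ i, Finset.univ.gcd (fun j => L.adjugate (Fin.last n) j) * P (Fin.last n) i
          = L.adjugate (Fin.last n) i) ∨
        (∀ i, Finset.univ.gcd (fun j => L.adjugate (Fin.last n) j) * P (Fin.last n) i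
          = - L.adjugate (Fin.last n) i)) := by
  have hL1 : L.mulVec 1 = 0 := by
    funext i
    rw [Matrix.mulVec, dotProduct, ← Finset.add_sum_erase _ _ (Finset.mem_univ i)]
    have h : ∑ j ∈ Finset.univ.erase i, L i j * (1 : Fin (n + 1) → ℤ) j =
        ∑ j ∈ Finset.univ.erase i, -(a i j : ℤ) :=
      Finset.sum_congr rfl fun j hj => by
        rw [hL, if_neg (Finset.ne_of_mem_erase hj).symm, Pi.one_apply, mul_one]
    rw [h, hL, if_pos rfl, hsum i]
    simp
  have hq := isUnit_last_last L P Q dv hQ (fun i => (hdpos i).ne') hL1 hD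
  have hrow := adjugate_last_row L P Q dv hD
  -- The last row of `adj L` is a unit times `∏ dv` times the last row of `P`.
  obtain ⟨u, hu, hadj⟩ : ∃ u : ℤ, IsUnit u ∧ ∀ i,
      L.adjugate (Fin.last n) i = u * (∏ k, dv k) * P (Fin.last n) i := by
    refine ⟨P.det * Q.det * Q (Fin.last n) (Fin.last n), (hP.mul hQ).mul hq, fun i => ?_⟩
    have hsq := Int.isUnit_mul_self (hP.mul hQ)
    linear_combination (P.det * Q.det) * hrow i - L.adjugate (Fin.last n) i * hsq
  have hprod : 0 ≤ ∏ k, dv k := Finset.prod_nonneg fun k _ => (hdpos k).le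
  have hgcd : Finset.univ.gcd (fun i => L.adjugate (Fin.last n) i) = ∏ k, dv k := by
    simp only [hadj]
    rw [Finset.gcd_mul_left, gcd_row_eq_one P hP, mul_one, normalize_mul,
      normalize_eq_one.2 hu, one_mul, Int.normalize_of_nonneg hprod]
  refine ⟨hgcd.symm, ?_⟩
  rw [hgcd]
  rcases Int.isUnit_iff.1 hu with rfl | rfl
  · exact Or.inl fun i => by rw [hadj i]; ring
  · exact Or.inr fun i => by rw [hadj i]; ring
end

section
/- Let L be an n×n positive critical binomial matrix and let 𝓛 ⊆ ℤ^n be the subgroup spanned by the columns of L. Then the torsion subgroup of the quotient group ℤ^n/𝓛 is finite of cardinality d, where d is the greatest common divisor of the entries of the last row of adj(L); and 𝓛 is a direct summand of ℤ^n if and only if d = 1. -/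
/-!
Write `m` for the last row of `adj L`, so that `m L = det L • e_last = 0`: all columns of `L` lie in
the kernel of the functional `x ↦ m ⬝ x`. By Bézout there is `w ∈ ℤ^{n+1}` with `m ⬝ w = d`.
Replacing the last column of `L` by `w` gives a matrix `M` whose determinant is, by Cramer's rule,
`m ⬝ w = d`. Since the rows of `L` sum to zero, the last column of `L` is an integral combination of
the others, so the columns of `M` span `𝓛 + ℤ w`; hence `ℤ^{n+1} / (𝓛 + ℤ w)` has order `d`
(`card_quotient_range_mulVecLin`), provided `d ≠ 0`. The latter holds because the minor
`adj(L)_{last,last}` is the determinant of a strictly diagonally dominant matrix.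

The canonical map from the torsion subgroup of `ℤ^{n+1} / 𝓛` to `ℤ^{n+1} / (𝓛 + ℤ w)` is bijective
(`card_torsion_eq_card_quotient`): torsion classes are represented by vectors killed by `m`, and
`m ⬝ x` is always a multiple of `d = m ⬝ w`, so that modulo `w` every vector can be moved into the
kernel of `m`. This gives the order of the torsion. If `𝓛` has a complement, then the quotient
embeds in `ℤ^{n+1}`, so there is no torsion and `d = 1`; conversely, if `d = 1`, then
`𝓛 + ℤ w = ℤ^{n+1}` and `ℤ w` is a complement of `𝓛`.
-/

open Matrix

lemma card_quotient_range_mulVecLin {ι : Type*} [Fintype ι] [DecidableEq ι]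
    (M : Matrix ι ι ℤ) (hM : M.det ≠ 0) :
    Nat.card ((ι → ℤ) ⧸ LinearMap.range M.mulVecLin) = M.det.natAbs := by
  have hinj : Function.Injective M.mulVecLin := by
    rw [← LinearMap.ker_eq_bot, LinearMap.ker_eq_bot']
    intro v hv
    exact Matrix.eq_zero_of_mulVec_eq_zero hM hv
  have key := Submodule.natAbs_det_equiv (LinearMap.range M.mulVecLin)
    (LinearEquiv.ofInjective M.mulVecLin hinj)
  rw [← key, ← LinearMap.det_toLin' M]
  congr 2

section Torsion

variable {V : Type*} [AddCommGroup V] {P : Submodule ℤ V} {f : V →ₗ[ℤ] ℤ} {w : V} {d : ℤ}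

/-- If `f` vanishes on `P` and `f w ≠ 0`, an element of `P + ℤ w` killed by `f` lies in `P`. -/
lemma mem_of_mem_sup_span (hP : ∀ x ∈ P, f x = 0) (hd : d ≠ 0) (hw : f w = d)
    {x : V} (hx : x ∈ P ⊔ Submodule.span ℤ {w}) (hfx : f x = 0) : x ∈ P := by
  obtain ⟨y, hy, z, hz, rfl⟩ := Submodule.mem_sup.1 hx
  obtain ⟨c, rfl⟩ := Submodule.mem_span_singleton.1 hz
  have hc : c = 0 := by simpa [hP y hy, hw, hd] using hfx
  simpa [hc] using hy

/-- If `f` vanishes on `P`, `f w` divides all values of `f`, and `P + ℤ w` has finite exponent in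
`V`, then the torsion of `V / P` is in bijection with `V / (P + ℤ w)`. -/
lemma card_torsion_eq_card_quotient (hP : ∀ x ∈ P, f x = 0) (hd : d ≠ 0) (hw : f w = d)
    (hdvd : ∀ x, d ∣ f x) {k : ℤ} (hk : k ≠ 0)
    (hfin : ∀ x, k • x ∈ P ⊔ Submodule.span ℤ {w}) :
    Nat.card (Submodule.torsion ℤ (V ⧸ P)) = Nat.card (V ⧸ (P ⊔ Submodule.span ℤ {w})) := by
  have hle : P ≤ P ⊔ Submodule.span ℤ {w} := le_sup_left
  let g : Submodule.torsion ℤ (V ⧸ P) →ₗ[ℤ] (V ⧸ (P ⊔ Submodule.span ℤ {w})) :=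
    (Submodule.factor hle).comp (Submodule.subtype _)
  refine Nat.card_congr (Equiv.ofBijective g ⟨?_, ?_⟩)
  · rw [← LinearMap.ker_eq_bot, LinearMap.ker_eq_bot']
    rintro ⟨y, hy⟩ hgy
    obtain ⟨x, rfl⟩ := Submodule.Quotient.mk_surjective P y
    have hx : x ∈ P ⊔ Submodule.span ℤ {w} := (Submodule.Quotient.mk_eq_zero _).1 hgy
    obtain ⟨⟨c, hc⟩, hcx⟩ := (Submodule.mem_torsion_iff _).1 hy
    have hcx' : c • x ∈ P := (Submodule.Quotient.mk_eq_zero _).1 hcx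
    have hfx : f x = 0 := by
      have h := hP _ hcx'
      have hc0 : c ≠ 0 := nonZeroDivisors.ne_zero hc
      simpa [hc0] using h
    exact Subtype.ext ((Submodule.Quotient.mk_eq_zero _).2
      (mem_of_mem_sup_span hP hd hw hx hfx))
  · intro y
    obtain ⟨x, rfl⟩ := Submodule.Quotient.mk_surjective _ y
    obtain ⟨c, hc⟩ := hdvd x
    have hf0 : f (x - c • w) = 0 := by simp [hw, hc, mul_comm]
    have hmem : k • (x - c • w) ∈ P :=
      mem_of_mem_sup_span hP hd hw (hfin _) (by rw [map_smul, hf0, smul_zero])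
    refine ⟨⟨Submodule.Quotient.mk (x - c • w), (Submodule.mem_torsion_iff _).2
      ⟨⟨k, mem_nonZeroDivisors_of_ne_zero hk⟩, (Submodule.Quotient.mk_eq_zero _).2 hmem⟩⟩, ?_⟩
    refine (Submodule.Quotient.eq _).2 ?_
    refine Submodule.mem_sup_right (Submodule.mem_span_singleton.2 ⟨-c, ?_⟩)
    simp

end Torsion

/-- Replacing a column of a matrix with vanishing row sums by `w` yields a matrix whose column span
is that of the original matrix plus `ℤ w`. -/
lemma range_updateCol {ι : Type*} [Fintype ι] [DecidableEq ι] (L : Matrix ι ι ℤ)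
    (hrow : ∀ i, ∑ j, L i j = 0) (k : ι) (w : ι → ℤ) :
    LinearMap.range (L.updateCol k w).mulVecLin =
      Submodule.span ℤ (Set.range fun j i => L i j) ⊔ Submodule.span ℤ {w} := by
  have hcol : ∀ j, j ≠ k → (L.updateCol k w).col j = fun i => L i j := by
    intro j hj; ext i; simp [Matrix.col, hj]
  have hcolk : (L.updateCol k w).col k = w := by
    ext i; simp [Matrix.col]
  rw [Matrix.range_mulVecLin]
  apply le_antisymm
  · rw [Submodule.span_le]
    rintro _ ⟨j, rfl⟩
    by_cases hj : j = k
    · subst hj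
      rw [hcolk]
      exact Submodule.mem_sup_right (Submodule.mem_span_singleton_self w)
    · rw [hcol j hj]
      exact Submodule.mem_sup_left (Submodule.subset_span ⟨j, rfl⟩)
  · have hmem : ∀ j, j ≠ k → (fun i => L i j) ∈
        Submodule.span ℤ (Set.range (L.updateCol k w).col) := fun j hj =>
      Submodule.subset_span ⟨j, hcol j hj⟩
    rw [sup_le_iff, Submodule.span_le, Submodule.span_le]
    constructor
    · rintro _ ⟨j, rfl⟩
      by_cases hj : j = k
      · subst hj
        have hsum : (fun i => L i j) = -∑ l ∈ Finset.univ.erase j, fun i => L i l := by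
          ext i
          have h := hrow i
          rw [← Finset.add_sum_erase _ _ (Finset.mem_univ j)] at h
          simp only [Pi.neg_apply, Finset.sum_apply]
          linarith
        simp only [hsum]
        exact Submodule.neg_mem _ (Submodule.sum_mem _ fun l hl =>
          hmem l (Finset.ne_of_mem_erase hl))
      · exact hmem j hj
    · rintro _ rfl
      exact Submodule.subset_span ⟨k, hcolk⟩

/-- The minor of a positive critical binomial matrix obtained by deleting the last row and column
is strictly diagonally dominant, hence nonzero. -/
lemma adjugate_last_last_ne_zero {n : ℕ}
    (a : Fin (n + 1) → Fin (n + 1) → ℕ) (hpos : ∀ i j, 0 < a i j)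
    (hsum : ∀ i, a i i = ∑ j ∈ Finset.univ.erase i, a i j)
    (L : Matrix (Fin (n + 1)) (Fin (n + 1)) ℤ)
    (hL : ∀ i j, L i j = if i = j then (a i i : ℤ) else -(a i j : ℤ)) :
    L.adjugate (Fin.last n) (Fin.last n) ≠ 0 := by
  rw [Matrix.adjugate_fin_succ_eq_det_submatrix]
  refine mul_ne_zero (pow_ne_zero _ (by norm_num)) ?_
  set B := L.submatrix (Fin.last n).succAbove (Fin.last n).succAbove with hB
  have hreal : (B.map (Int.castRingHom ℝ)).det ≠ 0 := by
    apply det_ne_zero_of_sum_row_lt_diag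
    intro k
    have hnorm : ∀ j, ‖(B.map (Int.castRingHom ℝ)) k j‖ = (a k.castSucc j.castSucc : ℝ) := by
      intro j
      by_cases hkj : k = j
      · subst hkj; simp [hB, hL]
      · simp [hB, hL, hkj]
    simp only [hnorm]
    have hlast : a k.castSucc k.castSucc =
        ∑ j ∈ Finset.univ.erase k, a k.castSucc j.castSucc + a k.castSucc (Fin.last n) := by
      have h1 := Finset.add_sum_erase Finset.univ (fun j => a k.castSucc j)
        (Finset.mem_univ k.castSucc)
      rw [← hsum, Fin.sum_univ_castSucc,
        ← Finset.add_sum_erase Finset.univ (fun j : Fin n => a k.castSucc j.castSucc)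
        (Finset.mem_univ k)] at h1
      lia
    have hp := hpos k.castSucc (Fin.last n)
    rw [← Nat.cast_sum]
    exact_mod_cast (by lia)
  intro h0
  apply hreal
  rw [← RingHom.mapMatrix_apply, ← RingHom.map_det, h0, map_zero]

/-- Let `L` be an `(n+1)×(n+1)` PCB matrix and `𝓛 ⊆ ℤ^{n+1}` the
subgroup spanned by the columns of `L`.  Then the torsion subgroup of `ℤ^{n+1}/𝓛` is
finite of cardinality `d`, the gcd of the entries of the last row of `adj(L)`
(a positive natural number, so `Nat.card = d` indeed expresses finiteness); and `𝓛` is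
a direct summand of `ℤ^{n+1}` (it admits a complementary submodule) iff `d = 1`. -/
theorem stmt17 {n : ℕ} (hn : 1 ≤ n)
    (a : Fin (n + 1) → Fin (n + 1) → ℕ) (hpos : ∀ i j, 0 < a i j)
    (hsum : ∀ i, a i i = ∑ j ∈ Finset.univ.erase i, a i j)
    (L : Matrix (Fin (n + 1)) (Fin (n + 1)) ℤ)
    (hL : ∀ i j, L i j = if i = j then (a i i : ℤ) else -(a i j : ℤ))
    (𝓛 : Submodule ℤ (Fin (n + 1) → ℤ))
    (h𝓛 : 𝓛 = Submodule.span ℤ (Set.range fun j i => L i j))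
    (d : ℕ) (hd : (d : ℤ) = Finset.univ.gcd (fun i => L.adjugate (Fin.last n) i)) :
    Nat.card (Submodule.torsion ℤ ((Fin (n + 1) → ℤ) ⧸ 𝓛)) = d ∧
      ((∃ q : Submodule ℤ (Fin (n + 1) → ℤ), IsCompl 𝓛 q) ↔ d = 1) := by
  have hrow : ∀ i, ∑ j, L i j = 0 := by
    intro i
    have hoff : ∑ j ∈ Finset.univ.erase i, L i j = ∑ j ∈ Finset.univ.erase i, -(a i j : ℤ) :=
      Finset.sum_congr rfl fun j hj => by
        rw [hL i j, if_neg (Finset.ne_of_mem_erase hj).symm]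
    rw [← Finset.add_sum_erase _ _ (Finset.mem_univ i), hoff, hL i i, if_pos rfl, hsum i,
      Finset.sum_neg_distrib, Nat.cast_sum, add_neg_cancel]
  have hdet : L.det = 0 := by
    refine Matrix.exists_mulVec_eq_zero_iff.1 ⟨1, one_ne_zero, ?_⟩
    ext i
    simp [Matrix.mulVec, dotProduct, hrow i]
  let f : (Fin (n + 1) → ℤ) →ₗ[ℤ] ℤ :=
    (LinearMap.proj (Fin.last n)).comp L.adjugate.mulVecLin
  have hf : ∀ x, f x = ∑ i, L.adjugate (Fin.last n) i * x i := fun _ => rfl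
  have hP : ∀ x ∈ 𝓛, f x = 0 := by
    intro x hx
    have hle : 𝓛 ≤ LinearMap.ker f := by
      rw [h𝓛, Submodule.span_le]
      rintro _ ⟨j, rfl⟩
      have h : (L.adjugate * L) (Fin.last n) j = 0 := by
        rw [Matrix.adjugate_mul, hdet]; simp
      simpa [hf, Matrix.mul_apply] using h
    exact hle hx
  have hd0 : (d : ℤ) ≠ 0 := by
    rw [hd, Ne, Finset.gcd_eq_zero_iff]
    intro h
    exact adjugate_last_last_ne_zero a hpos hsum L hL (h _ (Finset.mem_univ _))
  have hdvd : ∀ x, (d : ℤ) ∣ f x := by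
    intro x
    rw [hf, hd]
    exact Finset.dvd_sum fun i hi => (Finset.gcd_dvd hi).mul_right _
  obtain ⟨w, hw⟩ : ∃ w, f w = d := by
    obtain ⟨w, hw⟩ := Finset.gcd_eq_sum_mul Finset.univ (fun i => L.adjugate (Fin.last n) i)
    exact ⟨w, by rw [hf, hd, hw]⟩
  have hMdet : (L.updateCol (Fin.last n) w).det = d := by
    rw [← Matrix.cramer_apply, Matrix.cramer_eq_adjugate_mulVec]
    exact hw
  have hrange : LinearMap.range (L.updateCol (Fin.last n) w).mulVecLin =
      𝓛 ⊔ Submodule.span ℤ {w} := by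
    rw [h𝓛]; exact range_updateCol L hrow _ w
  have hcardQ : Nat.card ((Fin (n + 1) → ℤ) ⧸ (𝓛 ⊔ Submodule.span ℤ {w})) = d := by
    rw [← hrange, card_quotient_range_mulVecLin _ (by rw [hMdet]; exact hd0), hMdet,
      Int.natAbs_natCast]
  have hfin : ∀ x, (d : ℤ) • x ∈ 𝓛 ⊔ Submodule.span ℤ {w} := by
    intro x
    -- `M (adj M x) = det M • x = d • x`
    rw [← hrange]
    refine ⟨(L.updateCol (Fin.last n) w).adjugate *ᵥ x, ?_⟩
    rw [Matrix.mulVecLin_apply, Matrix.mulVec_mulVec, Matrix.mul_adjugate, hMdet,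
      Matrix.smul_mulVec, Matrix.one_mulVec]
  have hcard : Nat.card (Submodule.torsion ℤ ((Fin (n + 1) → ℤ) ⧸ 𝓛)) = d :=
    (card_torsion_eq_card_quotient hP hd0 hw hdvd hd0 hfin).trans hcardQ
  refine ⟨hcard, ?_, ?_⟩
  · rintro ⟨q, hq⟩
    have : Module.IsTorsionFree ℤ ((Fin (n + 1) → ℤ) ⧸ 𝓛) :=
      (Submodule.quotientEquivOfIsCompl 𝓛 q hq).injective.moduleIsTorsionFree _ (by simp)
    rw [← hcard, Submodule.isTorsionFree_iff_torsion_eq_bot.1 this]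
    simp
  · intro h1
    refine ⟨Submodule.span ℤ {w}, ?_, ?_⟩
    · rw [Submodule.disjoint_def]
      intro x hx hxw
      obtain ⟨c, rfl⟩ := Submodule.mem_span_singleton.1 hxw
      have hc : c = 0 := by
        have h := hP _ hx
        rw [map_smul, hw, h1] at h
        simpa using h
      simp [hc]
    · rw [codisjoint_iff, eq_top_iff]
      intro x _
      simpa [h1] using hfin x
end

section
/- Let I be the PCB ideal associated to L, m(I) its associated integer vector and d = gcd(m(I)). The following are equivalent: (i) S(I) is a prime ideal; (ii) S(I) = 𝔭_{m(I)}, the Herzog ideal associated to m(I); (iii) d = 1. -/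
/-!
Write `M` for the lattice spanned by the columns of `L`, and `μ` for the last row of `adj L`.

Inverting the variables turns the binomial of a column `c` into a unit times `x^c - 1`, so `B / IB`
is the group algebra `k[ℤ^{n+1} / M]` and `S(I)` is the kernel of `A → k[ℤ^{n+1} / M]`
(`contraction_eq_ker`). Everything then depends on the group `ℤ^{n+1} / M`.

The rows of `L` sum to zero, so `det L = 0` and `M` is contained in the orthogonal complement of
`μ`. By Bézout there is `u` with `μ · u = d`, and the matrix `N` obtained by adding `u` to the last
column of `L` has determinant `μ · u = d`. Cramer's rule for `N` shows that `d` kills `μ^⊥ / M`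
(`gcd_smul_mem_colLattice`), and surjectivity of `N` when `M` is saturated shows that saturation
forces `d = 1` (`isUnit_gcd_of_saturated`). Here `d ≠ 0`, since a principal minor of `L` is strictly
diagonally dominant.

If `d = 1`, then `M = μ^⊥`, the group `ℤ^{n+1} / M` embeds in `ℤ` through `μ`, and `S(I)` is the
Herzog ideal (`ker_latticeMap_eq_herzog`), which is prime as the kernel of a map to a domain.
If `S(I)` is prime, then `ℤ^{n+1} / M` has no torsion (`saturated_of_isPrime`), so `d = 1`.
-/

open MvPolynomial
open scoped Matrix

/-! ### The column lattice and the adjugate -/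

/-- A Bézout identity for the gcd of a finite family of integers. -/
lemma exists_dotProduct_eq_gcd {ι : Type*} [Fintype ι] (μ : ι → ℤ) :
    ∃ u : ι → ℤ, μ ⬝ᵥ u = Finset.univ.gcd μ := by
  have hdvd : Submodule.IsPrincipal.generator (Ideal.span (Set.range μ)) ∣ Finset.univ.gcd μ :=
    Finset.dvd_gcd fun i _ =>
      (Submodule.IsPrincipal.mem_iff_generator_dvd _).1 (Ideal.subset_span ⟨i, rfl⟩)
  obtain ⟨c, hc⟩ := Ideal.mem_span_range_iff_exists_fun.1
    ((Submodule.IsPrincipal.mem_iff_generator_dvd (Ideal.span (Set.range μ))).2 hdvd)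
  exact ⟨c, by rw [← hc, dotProduct]; exact Finset.sum_congr rfl fun i _ => mul_comm _ _⟩

section Lattice

variable {n : ℕ} (L : Matrix (Fin (n + 1)) (Fin (n + 1)) ℤ)

/-- The sublattice of `ℤ^{n+1}` generated by the columns of `L`. -/
def colLattice : AddSubgroup (Fin (n + 1) → ℤ) := L.mulVecLin.toAddMonoidHom.range

lemma mem_colLattice {w : Fin (n + 1) → ℤ} : w ∈ colLattice L ↔ ∃ y, L *ᵥ y = w := Iff.rfl

lemma det_eq_zero_of_mulVec_one (h1 : L *ᵥ 1 = 0) : L.det = 0 :=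
  Matrix.exists_mulVec_eq_zero_iff.1 ⟨1, one_ne_zero, h1⟩

lemma adjugate_dotProduct_mulVec (h1 : L *ᵥ 1 = 0) (y : Fin (n + 1) → ℤ) :
    L.adjugate (Fin.last n) ⬝ᵥ (L *ᵥ y) = 0 := by
  have h : L.adjugate *ᵥ (L *ᵥ y) = 0 := by
    rw [Matrix.mulVec_mulVec, Matrix.adjugate_mul, det_eq_zero_of_mulVec_one L h1]; simp
  exact congrFun h (Fin.last n)

/-- `L` with the vector `u` added to its last column. -/
def addLastCol (u : Fin (n + 1) → ℤ) : Matrix (Fin (n + 1)) (Fin (n + 1)) ℤ :=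
  L.updateCol (Fin.last n) (L.col (Fin.last n) + u)

lemma addLastCol_mulVec (u y : Fin (n + 1) → ℤ) :
    addLastCol L u *ᵥ y = L *ᵥ y + y (Fin.last n) • u := by
  have h : addLastCol L u = L + Matrix.vecMulVec u (Pi.single (Fin.last n) 1) := by
    ext i j
    by_cases hj : j = Fin.last n
    · subst hj; simp [addLastCol, Matrix.vecMulVec_apply]
    · simp [addLastCol, Matrix.vecMulVec_apply, hj]
  rw [h, Matrix.add_mulVec]
  congr 1
  ext i
  simp [Matrix.mulVec, dotProduct, Matrix.vecMulVec_apply, Pi.single_apply, mul_comm]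

/-- Since `det L = 0`, expanding along the last column leaves the last row of `adj L` paired
with `u`. -/
lemma det_addLastCol (h1 : L *ᵥ 1 = 0) (u : Fin (n + 1) → ℤ) :
    (addLastCol L u).det = L.adjugate (Fin.last n) ⬝ᵥ u := by
  have h2 : L.updateCol (Fin.last n) (L.col (Fin.last n)) = L := by
    ext i j
    by_cases hj : j = Fin.last n
    · subst hj; simp
    · simp [hj]
  rw [addLastCol, Matrix.det_updateCol_add, h2, det_eq_zero_of_mulVec_one L h1, zero_add,
    ← Matrix.cramer_apply, Matrix.cramer_eq_adjugate_mulVec]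
  rfl

/-- The quotient of the orthogonal complement of the last row of `adj L` by the column lattice
is killed by the gcd of that row. -/
lemma gcd_smul_mem_colLattice (h1 : L *ᵥ 1 = 0)
    (hd : Finset.univ.gcd (L.adjugate (Fin.last n)) ≠ 0) {w : Fin (n + 1) → ℤ}
    (hw : L.adjugate (Fin.last n) ⬝ᵥ w = 0) :
    Finset.univ.gcd (L.adjugate (Fin.last n)) • w ∈ colLattice L := by
  obtain ⟨u, hu⟩ := exists_dotProduct_eq_gcd (L.adjugate (Fin.last n))
  set d := Finset.univ.gcd (L.adjugate (Fin.last n)) with hd'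
  have hy := Matrix.mulVec_cramer (addLastCol L u) w
  set y := (addLastCol L u).cramer w
  rw [det_addLastCol L h1, hu, addLastCol_mulVec] at hy
  -- Pairing with the last row of the adjugate shows that the coefficient of `u` vanishes.
  have h0 := congrArg (fun z => L.adjugate (Fin.last n) ⬝ᵥ z) hy
  simp only [dotProduct_add, dotProduct_smul, adjugate_dotProduct_mulVec L h1, hu, hw,
    zero_add, smul_eq_mul, mul_zero] at h0
  replace h0 := (mul_eq_zero.1 h0).resolve_right hd
  exact ⟨y, by rw [h0, zero_smul, add_zero] at hy; exact hy⟩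

/-- If the column lattice is saturated with respect to the gcd `d` of the last row of `adj L`,
then adding to the last column of `L` a vector `u` realising `d` gives a surjective matrix of
determinant `d`, so `d = 1`. -/
lemma isUnit_gcd_of_saturated (h1 : L *ᵥ 1 = 0)
    (hd : Finset.univ.gcd (L.adjugate (Fin.last n)) ≠ 0)
    (hsat : ∀ w, Finset.univ.gcd (L.adjugate (Fin.last n)) • w ∈ colLattice L →
      w ∈ colLattice L) :
    IsUnit (Finset.univ.gcd (L.adjugate (Fin.last n))) := by
  obtain ⟨u, hu⟩ := exists_dotProduct_eq_gcd (L.adjugate (Fin.last n))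
  have key := fun w => gcd_smul_mem_colLattice L h1 hd (w := w)
  have hdvd : ∀ z : Fin (n + 1) → ℤ,
      Finset.univ.gcd (L.adjugate (Fin.last n)) ∣ L.adjugate (Fin.last n) ⬝ᵥ z := fun z =>
    Finset.dvd_sum fun i _ => Dvd.dvd.mul_right (Finset.gcd_dvd (Finset.mem_univ i)) _
  have hdet := det_addLastCol L h1 u
  set d := Finset.univ.gcd (L.adjugate (Fin.last n)) with hd'
  rw [hu] at hdet
  rw [← hdet, ← Matrix.isUnit_iff_isUnit_det, ← Matrix.mulVec_surjective_iff_isUnit]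
  intro z
  obtain ⟨c, hc⟩ := hdvd z
  obtain ⟨y, hy⟩ : z - c • u ∈ colLattice L := by
    refine hsat _ (key _ ?_)
    rw [dotProduct_sub, dotProduct_smul, hu, hc, smul_eq_mul, mul_comm, sub_self]
  replace hy : L *ᵥ y = z - c • u := hy
  -- Constant vectors lie in the kernel of `L`, so the last entry of `y` may be set to `c`.
  refine ⟨y + (c - y (Fin.last n)) • 1, ?_⟩
  rw [addLastCol_mulVec, Matrix.mulVec_add, Matrix.mulVec_smul, h1, hy]
  simp

/-- The minor obtained by deleting the last row and column is strictly diagonally dominant, so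
the last row of `adj L` is nonzero. -/
lemma gcd_adjugate_ne_zero (a : Fin (n + 1) → Fin (n + 1) → ℕ) (hpos : ∀ i j, 0 < a i j)
    (hsum : ∀ i, a i i = ∑ j ∈ Finset.univ.erase i, a i j)
    (hL : ∀ i j, L i j = if i = j then (a i i : ℤ) else -(a i j : ℤ)) :
    Finset.univ.gcd (L.adjugate (Fin.last n)) ≠ 0 := by
  intro h
  have h0 := Finset.gcd_eq_zero_iff.1 h (Fin.last n) (Finset.mem_univ _)
  rw [Matrix.adjugate_fin_succ_eq_det_submatrix] at h0
  have h2 : (L.submatrix (Fin.last n).succAbove (Fin.last n).succAbove).det = 0 := by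
    simpa using h0
  refine det_ne_zero_of_sum_row_lt_diag (K := ℝ)
    (A := (L.submatrix (Fin.last n).succAbove (Fin.last n).succAbove).map (Int.castRingHom ℝ))
    ?_ ?_
  · intro i
    have e1 : ∀ j ∈ Finset.univ.erase i, ‖((L.submatrix (Fin.last n).succAbove
        (Fin.last n).succAbove).map (Int.castRingHom ℝ)) i j‖ = (a i.castSucc j.castSucc : ℝ) := by
      intro j hj
      have : i ≠ j := (Finset.ne_of_mem_erase hj).symm
      simp [hL, this]
    rw [Finset.sum_congr rfl e1]
    have e2 : (a i.castSucc i.castSucc : ℝ) =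
        ∑ j ∈ Finset.univ.erase i, (a i.castSucc j.castSucc : ℝ)
          + (a i.castSucc (Fin.last n) : ℝ) := by
      have h3 := Finset.add_sum_erase Finset.univ (fun j => a i.castSucc j)
        (Finset.mem_univ i.castSucc)
      have h4 := Finset.add_sum_erase Finset.univ (fun j : Fin n => a i.castSucc j.castSucc)
        (Finset.mem_univ i)
      rw [Fin.sum_univ_castSucc, ← hsum] at h3
      have : a i.castSucc i.castSucc = ∑ j ∈ Finset.univ.erase i, a i.castSucc j.castSucc
          + a i.castSucc (Fin.last n) := by
        omega
      exact_mod_cast this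
    have := hpos i.castSucc (Fin.last n)
    have h5 : (0 : ℝ) < a i.castSucc (Fin.last n) := by exact_mod_cast this
    have e3 : ‖((L.submatrix (Fin.last n).succAbove
        (Fin.last n).succAbove).map (Int.castRingHom ℝ)) i i‖ = (a i.castSucc i.castSucc : ℝ) := by
      simp [hL]
    linarith
  · rw [← RingHom.mapMatrix_apply, ← RingHom.map_det, h2, map_zero]

end Lattice

/-! ### Lattice ideals and group algebras -/

section GroupAlgebra

variable {ι : Type*} (k : Type*) [Field k] (M : AddSubgroup (ι → ℤ))

lemma isUnit_single (q : (ι → ℤ) ⧸ M) :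
    IsUnit (AddMonoidAlgebra.single q 1 : AddMonoidAlgebra k ((ι → ℤ) ⧸ M)) :=
  IsUnit.of_mul_eq_one (AddMonoidAlgebra.single (-q) 1) (by
    rw [AddMonoidAlgebra.single_mul_single, add_neg_cancel, mul_one, AddMonoidAlgebra.one_def])

variable [DecidableEq ι]

/-- The map `k[x] → k[ℤ^ι / M]` sending `x_i` to the class of the `i`-th basis vector; its kernel
is the lattice ideal of `M`. -/
noncomputable def latticeMap : MvPolynomial ι k →ₐ[k] AddMonoidAlgebra k ((ι → ℤ) ⧸ M) :=
  aeval fun i => AddMonoidAlgebra.single (QuotientAddGroup.mk (Pi.single i 1)) 1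

lemma latticeMap_X (i : ι) : latticeMap k M (X i) =
    AddMonoidAlgebra.single (QuotientAddGroup.mk (Pi.single i 1)) 1 := by
  simp [latticeMap]

lemma latticeMap_prod (s : Finset ι) (u : ι → ℕ) : latticeMap k M (∏ i ∈ s, X i ^ u i) =
    AddMonoidAlgebra.single
      (QuotientAddGroup.mk (∑ i ∈ s, (u i : ℤ) • (Pi.single i 1 : ι → ℤ))) 1 := by
  induction s using Finset.induction_on with
  | empty => simp only [Finset.prod_empty, map_one, Finset.sum_empty]; rfl
  | insert i s hi ih =>
    rw [Finset.prod_insert hi, map_mul, ih, map_pow, latticeMap_X, AddMonoidAlgebra.single_pow,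
      AddMonoidAlgebra.single_mul_single, Finset.sum_insert hi, one_pow, mul_one, natCast_zsmul]
    rfl

variable [Fintype ι]

lemma sum_smul_single (u : ι → ℤ) : ∑ i, u i • (Pi.single i 1 : ι → ℤ) = u := by
  ext j
  simp [Finset.sum_apply, Pi.single_apply]

lemma latticeMap_monomial (u : ι → ℕ) : latticeMap k M (∏ i, X i ^ u i) =
    AddMonoidAlgebra.single (QuotientAddGroup.mk (fun i => (u i : ℤ))) 1 := by
  rw [latticeMap_prod, sum_smul_single fun i => (u i : ℤ)]

/-- If the lattice ideal of `M` is prime then `ℤ^ι / M` is torsion-free: for `q` of finite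
order `r > 1`, written as the class of `u - v` with `u, v ≥ 0`, the factorisation of
`x^{ru} - x^{rv}` by the geometric sum has neither factor in the ideal. The geometric sum maps to
a unit times `∑_{i<r} [iq]`, whose coefficient at `0` is `1` in every characteristic. -/
lemma saturated_of_isPrime (hP : (RingHom.ker (latticeMap k M)).IsPrime) {d : ℕ} (hd : d ≠ 0)
    {w : ι → ℤ} (hw : d • w ∈ M) : w ∈ M := by
  set q : (ι → ℤ) ⧸ M := QuotientAddGroup.mk w with hq
  have hdq : d • q = 0 := by
    rw [hq, ← QuotientAddGroup.mk_nsmul]; exact (QuotientAddGroup.eq_zero_iff _).2 hw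
  set r := addOrderOf q with hr
  have hr0 : r ≠ 0 := fun h => hd (Nat.eq_zero_of_zero_dvd
    (h ▸ addOrderOf_dvd_iff_nsmul_eq_zero.2 hdq))
  have hrq : r • q = 0 := addOrderOf_nsmul_eq_zero q
  set x : MvPolynomial ι k := ∏ i, X i ^ (w i).toNat
  set y : MvPolynomial ι k := ∏ i, X i ^ (-w i).toNat
  obtain ⟨v, hv⟩ : ∃ v : (ι → ℤ) ⧸ M, latticeMap k M y = AddMonoidAlgebra.single v 1 :=
    ⟨_, latticeMap_monomial k M _⟩
  have hx : latticeMap k M x = AddMonoidAlgebra.single v 1 * AddMonoidAlgebra.single q 1 := by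
    rw [← hv, latticeMap_monomial, latticeMap_monomial, AddMonoidAlgebra.single_mul_single,
      mul_one, hq, ← QuotientAddGroup.mk_add]
    congr 2
    ext i
    simp only [Pi.add_apply]
    omega
  have hmem : (∑ i ∈ Finset.range r, x ^ i * y ^ (r - 1 - i)) * (x - y)
      ∈ RingHom.ker (latticeMap k M) := by
    rw [geom_sum₂_mul, RingHom.mem_ker, map_sub, map_pow, map_pow, hx, hv, mul_pow,
      AddMonoidAlgebra.single_pow q, hrq, one_pow, ← AddMonoidAlgebra.one_def, mul_one, sub_self]
  rcases hP.mem_or_mem hmem with h | h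
  · exfalso
    have hgeom : latticeMap k M (∑ i ∈ Finset.range r, x ^ i * y ^ (r - 1 - i)) =
        AddMonoidAlgebra.single v 1 ^ (r - 1) *
          ∑ i ∈ Finset.range r, AddMonoidAlgebra.single (i • q) 1 := by
      rw [map_sum, Finset.mul_sum]
      refine Finset.sum_congr rfl fun i hi => ?_
      have hi' : r - 1 = i + (r - 1 - i) := by have := Finset.mem_range.1 hi; omega
      rw [map_mul, map_pow, map_pow, hx, hv, mul_pow, AddMonoidAlgebra.single_pow q, one_pow]
      conv_rhs => rw [hi', pow_add]
      ring
    rw [RingHom.mem_ker, hgeom, ((isUnit_single k M v).pow _).mul_right_eq_zero] at h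
    have h0 := congrArg (fun g : AddMonoidAlgebra k ((ι → ℤ) ⧸ M) => g.coeff 0) h
    have h1 : ∀ i ∈ Finset.range r, i ≠ 0 →
        (AddMonoidAlgebra.single (i • q) 1 : AddMonoidAlgebra k ((ι → ℤ) ⧸ M)).coeff 0 = 0 := by
      intro i hi hi0
      have : i • q ≠ 0 := fun h' => hi0 (Nat.eq_zero_of_dvd_of_lt
        (addOrderOf_dvd_iff_nsmul_eq_zero.2 h') (Finset.mem_range.1 hi))
      simp [this]
    simp only [AddMonoidAlgebra.coeff_sum, Finsupp.finsetSum_apply] at h0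
    rw [Finset.sum_eq_single_of_mem 0 (Finset.mem_range.2 (Nat.pos_of_ne_zero hr0)) h1] at h0
    simp at h0
  · rw [RingHom.mem_ker, map_sub, hx, hv, sub_eq_zero,
      (isUnit_single k M v).mul_eq_left, AddMonoidAlgebra.one_def] at h
    have : q = 0 := by
      by_contra hne
      have h0 := congrArg (fun g : AddMonoidAlgebra k ((ι → ℤ) ⧸ M) => g.coeff 0) h
      simp [hne] at h0
    exact (QuotientAddGroup.eq_zero_iff _).1 this

/-- If `M` is the orthogonal complement of `m`, then `ℤ^ι / M` embeds into `ℤ` through `m`, and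
`k[x] → k[ℤ^ι / M]` followed by the induced embedding into `k[t, t⁻¹]` is `x_i ↦ t^{m i}`. -/
lemma ker_latticeMap_eq_herzog (m : ι → ℕ)
    (hM : ∀ w, w ∈ M ↔ (fun i => (m i : ℤ)) ⬝ᵥ w = 0) :
    RingHom.ker (latticeMap k M) =
      RingHom.ker (aeval (R := k) fun i => (Polynomial.X : Polynomial k) ^ m i) := by
  let ψ : (ι → ℤ) →+ ℤ :=
    { toFun := fun w => (fun i => (m i : ℤ)) ⬝ᵥ w
      map_zero' := dotProduct_zero _
      map_add' := fun _ _ => dotProduct_add _ _ _ }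
  let θ : (ι → ℤ) ⧸ M →+ ℤ := QuotientAddGroup.lift M ψ fun w hw => (hM w).1 hw
  have hθ : Function.Injective θ := by
    rw [injective_iff_map_eq_zero]
    intro q
    induction q using QuotientAddGroup.induction_on with
    | H w => exact fun h => (QuotientAddGroup.eq_zero_iff _).2 ((hM w).2 h)
  have hcomp : (AddMonoidAlgebra.mapDomainAlgHom k k θ).comp (latticeMap k M) =
      (Polynomial.toLaurentAlg (R := k)).comp
        (aeval (R := k) fun i => (Polynomial.X : Polynomial k) ^ m i) := by
    refine MvPolynomial.algHom_ext fun i => ?_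
    have : θ (QuotientAddGroup.mk (Pi.single i 1)) = (m i : ℤ) := by
      change (fun i => (m i : ℤ)) ⬝ᵥ (Pi.single i 1) = _
      simp
    simp only [AlgHom.comp_apply, latticeMap_X, aeval_X, map_pow,
      Polynomial.toLaurentAlg_apply, Polynomial.toLaurent_X, LaurentPolynomial.T_pow, mul_one]
    rw [AddMonoidAlgebra.mapDomainAlgHom_apply, AddMonoidAlgebra.mapDomain_single, this]
    rfl
  ext g
  have hg := DFunLike.congr_fun hcomp g
  simp only [AlgHom.comp_apply] at hg
  rw [RingHom.mem_ker, RingHom.mem_ker]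
  constructor
  · intro h
    rw [h, map_zero] at hg
    exact (map_eq_zero_iff _ Polynomial.toLaurent_injective).1 hg.symm
  · intro h
    rw [h, map_zero] at hg
    exact (map_eq_zero_iff (AddMonoidAlgebra.mapDomainAlgHom k k θ)
      (AddMonoidAlgebra.mapDomain_injective hθ)).1 hg

end GroupAlgebra

/-! ### The contraction as a lattice ideal -/

section Contraction

variable {n : ℕ} (k : Type*) [Field k] (L : Matrix (Fin (n + 1)) (Fin (n + 1)) ℤ)
  (a : Fin (n + 1) → Fin (n + 1) → ℕ)

/-- The binomial of the `j`-th column of `L` lies in the lattice ideal of the column lattice. -/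
lemma latticeMap_binomial
    (hL : ∀ i j, L i j = if i = j then (a i i : ℤ) else -(a i j : ℤ))
    (j : Fin (n + 1)) :
    latticeMap k (colLattice L)
      (X j ^ a j j - ∏ i ∈ Finset.univ.erase j, X i ^ a i j) = 0 := by
  have h1 := latticeMap_prod k (colLattice L) {j} fun i => a i j
  rw [Finset.prod_singleton, Finset.sum_singleton] at h1
  rw [map_sub, sub_eq_zero, h1, latticeMap_prod]
  congr 1
  symm
  rw [QuotientAddGroup.eq]
  refine ⟨Pi.single j 1, ?_⟩
  change L *ᵥ Pi.single j 1 = _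
  ext i
  by_cases hij : i = j
  · subst hij
    simp [hL, Finset.sum_apply, Pi.single_apply, Finset.sum_ite_eq]
  · simp [hL, Finset.sum_apply, Pi.single_apply, Finset.sum_ite_eq, hij]

/-- The homomorphism `ℤ^ι → Cˣ` sending `w` to `∏ x_i ^ (w i)`. -/
def unitHom {ι C : Type*} [Fintype ι] [CommRing C] (x : ι → Cˣ) : (ι → ℤ) →+ Additive Cˣ where
  toFun w := Additive.ofMul (∏ i, x i ^ w i)
  map_zero' := by simp
  map_add' v w := by
    rw [← ofMul_mul, ← Finset.prod_mul_distrib]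
    simp [zpow_add]

lemma colLattice_le_ker_unitHom
    (hL : ∀ i j, L i j = if i = j then (a i i : ℤ) else -(a i j : ℤ))
    {C : Type*} [CommRing C] (x : Fin (n + 1) → Cˣ)
    (hx : ∀ j, x j ^ a j j = ∏ i ∈ Finset.univ.erase j, x i ^ a i j) :
    colLattice L ≤ (unitHom x).ker := by
  have hcol : ∀ j, unitHom x (L.col j) = 0 := by
    intro j
    change Additive.ofMul (∏ i, x i ^ L i j) = 0
    rw [ofMul_eq_zero, ← Finset.mul_prod_erase _ _ (Finset.mem_univ j), hL, if_pos rfl,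
      zpow_natCast, hx, ← Finset.prod_mul_distrib]
    refine Finset.prod_eq_one fun i hi => ?_
    rw [hL, if_neg (Finset.ne_of_mem_erase hi), zpow_neg, zpow_natCast, mul_inv_cancel]
  rintro _ ⟨y, rfl⟩
  change unitHom x (L *ᵥ y) = 0
  have : L *ᵥ y = ∑ j, y j • L.col j := by
    ext i
    simp [Matrix.mulVec, dotProduct, mul_comm]
  rw [this, map_sum]
  exact Finset.sum_eq_zero fun j _ => by rw [map_zsmul, hcol, smul_zero]

/-- The contraction of `IB` to `A` is the lattice ideal of the column lattice of `L`. One inclusion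
holds because `x` becomes a unit in the group algebra; for the other, `A → B / IB` factors through
the group algebra, the variables being units of `B / IB` that satisfy the column relations. -/
lemma contraction_eq_ker
    (hL : ∀ i j, L i j = if i = j then (a i i : ℤ) else -(a i j : ℤ))
    (f : Fin (n + 1) → MvPolynomial (Fin (n + 1)) k)
    (hf : ∀ j, f j = X j ^ a j j - ∏ i ∈ Finset.univ.erase j, X i ^ a i j)
    (B : Type*) [CommRing B] [Algebra (MvPolynomial (Fin (n + 1)) k) B] [Algebra k B]
    [IsScalarTower k (MvPolynomial (Fin (n + 1)) k) B]
    [IsLocalization.Away (∏ i, (X i : MvPolynomial (Fin (n + 1)) k)) B] :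
    ((Ideal.span (Set.range f)).map (algebraMap (MvPolynomial (Fin (n + 1)) k) B)).comap
      (algebraMap (MvPolynomial (Fin (n + 1)) k) B) =
      RingHom.ker (latticeMap k (colLattice L)) := by
  have hfker : Ideal.span (Set.range f) ≤ RingHom.ker (latticeMap k (colLattice L)) := by
    rw [Ideal.span_le]
    rintro _ ⟨j, rfl⟩
    rw [hf]
    exact latticeMap_binomial k L a hL j
  apply le_antisymm
  · have hu : IsUnit ((latticeMap k (colLattice L)).toRingHom
        (∏ i, (X i : MvPolynomial (Fin (n + 1)) k))) := by
      have := latticeMap_monomial k (colLattice L) fun _ => 1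
      simp only [pow_one] at this
      change IsUnit (latticeMap k (colLattice L) _)
      rw [this]
      exact isUnit_single _ _ _
    let Φ := IsLocalization.Away.lift (S := B) _ hu
    have hΦ : Φ.comp (algebraMap _ B) =
        (latticeMap k (colLattice L)).toRingHom :=
      IsLocalization.Away.lift_comp _ hu
    intro g hg
    have h1 : Ideal.map (algebraMap _ B) (Ideal.span (Set.range f)) ≤ RingHom.ker Φ := by
      rw [Ideal.map_le_iff_le_comap]
      intro p hp
      rw [Ideal.mem_comap, RingHom.mem_ker, ← RingHom.comp_apply, hΦ]
      exact hfker hp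
    have h2 := h1 hg
    rw [RingHom.mem_ker, ← RingHom.comp_apply, hΦ] at h2
    exact h2
  · set J := (Ideal.span (Set.range f)).map (algebraMap (MvPolynomial (Fin (n + 1)) k) B)
    let π : MvPolynomial (Fin (n + 1)) k →ₐ[k] B ⧸ J :=
      (Ideal.Quotient.mkₐ k J).comp (IsScalarTower.toAlgHom k _ B)
    have hπ : ∀ g, π g = 0 ↔ algebraMap _ B g ∈ J := fun g => Ideal.Quotient.eq_zero_iff_mem
    have hunit : ∀ i, IsUnit (π (X i)) := by
      intro i
      have h1 : IsUnit (algebraMap _ B (∏ i, (X i : MvPolynomial (Fin (n + 1)) k))) :=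
        IsLocalization.Away.algebraMap_isUnit _
      have h2 : IsUnit (algebraMap _ B (X i : MvPolynomial (Fin (n + 1)) k)) :=
        isUnit_of_dvd_unit (map_dvd _ (Finset.dvd_prod_of_mem _ (Finset.mem_univ i))) h1
      exact h2.map (Ideal.Quotient.mkₐ k J)
    let x : Fin (n + 1) → (B ⧸ J)ˣ := fun i => (hunit i).unit
    have hxv : ∀ i, (x i : B ⧸ J) = π (X i) := fun i => rfl
    have hx : ∀ j, x j ^ a j j = ∏ i ∈ Finset.univ.erase j, x i ^ a i j := by
      intro j
      have h0 : π (f j) = 0 :=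
        (hπ _).2 (Ideal.mem_map_of_mem _ (Ideal.subset_span ⟨j, rfl⟩))
      rw [hf, map_sub, sub_eq_zero] at h0
      apply Units.ext
      rw [Units.coe_prod]
      simpa only [Units.val_pow_eq_pow_val, hxv, map_pow, map_prod] using h0
    let Θ : (Fin (n + 1) → ℤ) ⧸ colLattice L →+ Additive (B ⧸ J)ˣ :=
      QuotientAddGroup.lift _ (unitHom x) (colLattice_le_ker_unitHom L a hL x hx)
    let Ψ : AddMonoidAlgebra k ((Fin (n + 1) → ℤ) ⧸ colLattice L) →ₐ[k] B ⧸ J :=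
      AddMonoidAlgebra.lift k _ _ ((Units.coeHom _).comp (AddMonoidHom.toMultiplicativeLeft Θ))
    have hΨ : Ψ.comp (latticeMap k (colLattice L)) = π := by
      refine MvPolynomial.algHom_ext fun i => ?_
      rw [AlgHom.comp_apply, latticeMap_X]
      have h1 : Θ (QuotientAddGroup.mk (Pi.single i 1)) = Additive.ofMul (x i) := by
        change Additive.ofMul (∏ l, x l ^ (Pi.single i 1 : Fin (n + 1) → ℤ) l) = _
        rw [Finset.prod_eq_single i (fun l _ hl => by simp [hl]) (by simp)]
        simp
      simp only [Ψ, AddMonoidAlgebra.lift_single, one_smul, MonoidHom.comp_apply]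
      change ((Additive.toMul (Θ (QuotientAddGroup.mk (Pi.single i 1))) : (B ⧸ J)ˣ) : B ⧸ J) = _
      rw [h1]
      rfl
    intro g hg
    rw [Ideal.mem_comap, ← hπ, ← hΨ, AlgHom.comp_apply, (RingHom.mem_ker).1 hg, map_zero]

end Contraction

/-- Let `I` be the PCB ideal in `A = k[x_0, …, x_n]` associated to
the PCB matrix `L`, `m` the last row of `adj(L)` (its entries are positive integers),
`d = gcd(m)`, and `S(I) = IB ∩ A` the contraction of the extension of `I` to the
Laurent polynomial ring `B = A_x`.  The following are equivalent: (i) `S(I)` is prime;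
(ii) `S(I)` equals the Herzog ideal `𝔭_m`, the kernel of `A → k[t]`, `x_i ↦ t^{m i}`;
(iii) `d = 1`. -/
theorem stmt18 {n : ℕ} (hn : 1 ≤ n) (k : Type*) [Field k]
    (a : Fin (n + 1) → Fin (n + 1) → ℕ) (hpos : ∀ i j, 0 < a i j)
    (hsum : ∀ i, a i i = ∑ j ∈ Finset.univ.erase i, a i j)
    (L : Matrix (Fin (n + 1)) (Fin (n + 1)) ℤ)
    (hL : ∀ i j, L i j = if i = j then (a i i : ℤ) else -(a i j : ℤ))
    (f : Fin (n + 1) → MvPolynomial (Fin (n + 1)) k)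
    (hf : ∀ j, f j = X j ^ a j j - ∏ i ∈ Finset.univ.erase j, X i ^ a i j)
    (I : Ideal (MvPolynomial (Fin (n + 1)) k)) (hI : I = Ideal.span (Set.range f))
    (m : Fin (n + 1) → ℕ) (hm : ∀ i, (m i : ℤ) = L.adjugate (Fin.last n) i)
    (d : ℕ) (hd : (d : ℤ) = Finset.univ.gcd (fun i => L.adjugate (Fin.last n) i))
    (SI : Ideal (MvPolynomial (Fin (n + 1)) k))
    (hSI : SI = (I.map (algebraMap (MvPolynomial (Fin (n + 1)) k)
        (Localization (Submonoid.powers (∏ i, (X i : MvPolynomial (Fin (n + 1)) k)))))).comap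
      (algebraMap (MvPolynomial (Fin (n + 1)) k)
        (Localization (Submonoid.powers (∏ i, (X i : MvPolynomial (Fin (n + 1)) k)))))) :
    List.TFAE
      [SI.IsPrime,
        SI = RingHom.ker (MvPolynomial.aeval (R := k)
          (fun i => (Polynomial.X : Polynomial k) ^ m i)),
        d = 1] := by
  have h1 : L *ᵥ 1 = 0 := by
    ext i
    have := Finset.add_sum_erase Finset.univ (fun j => L i j) (Finset.mem_univ i)
    simp only [Matrix.mulVec, dotProduct, Pi.one_apply, mul_one, Pi.zero_apply]
    have h2 : ∑ j ∈ Finset.univ.erase i, L i j = ∑ j ∈ Finset.univ.erase i, -(a i j : ℤ) :=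
      Finset.sum_congr rfl fun j hj => by rw [hL, if_neg (Finset.ne_of_mem_erase hj).symm]
    rw [← this, h2, hL, if_pos rfl, hsum, Finset.sum_neg_distrib, Nat.cast_sum, add_neg_cancel]
  have hd0 := gcd_adjugate_ne_zero L a hpos hsum hL
  have hmL : (fun i => (m i : ℤ)) = L.adjugate (Fin.last n) := funext hm
  have hd' : Finset.univ.gcd (L.adjugate (Fin.last n)) = (d : ℤ) := hd.symm
  have hker : SI = RingHom.ker (latticeMap k (colLattice L)) := by
    rw [hSI, hI]
    exact contraction_eq_ker k L a hL f hf _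
  tfae_have 3 → 2 := by
    intro h
    rw [hker]
    refine ker_latticeMap_eq_herzog k (colLattice L) m fun w => ?_
    rw [hmL]
    constructor
    · rintro ⟨y, rfl⟩
      exact adjugate_dotProduct_mulVec L h1 y
    · intro hw
      have := gcd_smul_mem_colLattice L h1 hd0 hw
      rwa [hd', h, Nat.cast_one, one_smul] at this
  tfae_have 2 → 1 := by
    rintro h
    rw [h]
    exact RingHom.ker_isPrime _
  tfae_have 1 → 3 := by
    intro h
    rw [hker] at h
    have hdn : d ≠ 0 := by
      rintro rfl
      exact hd0 (by simpa using hd')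
    have hu := isUnit_gcd_of_saturated L h1 hd0 fun w hw =>
      saturated_of_isPrime k (colLattice L) h hdn (by rwa [hd', natCast_zsmul] at hw)
    rw [hd'] at hu
    exact Int.ofNat_isUnit.1 hu |> Nat.isUnit_iff.1
  tfae_finish
end

section
/- Suppose k contains d_{n−1} distinct d_{n−1}-th roots of unity (equivalently, k contains the d_{n−1}-th roots of unity and the characteristic of k is zero or a prime not dividing d_{n−1}). Then the ideals 𝔞_λ = ker(φ_λ) for λ ∈ Λ(D) are d pairwise distinct prime ideals of A, each of height n−1; they are precisely the minimal primes of I; and S(I) = ⋂_{λ∈Λ(D)} 𝔞_λ. In particular, S(I) is a radical ideal with exactly d associated primes. -/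
open MvPolynomial

/-!
Let `y` be the monomial change of coordinates on the torus with `xᵢ = ∏ⱼ yⱼ ^ P j i` (invertible
because `det P = ±1`).  Since `P L Q = diag(d₁, …, dₙ, 0)`, the equations `x ^ (L eⱼ) = 1` defining
`I` on the torus become `yⱼ ^ dⱼ = 1` for `j ≤ n`, with the last coordinate free.  In a local
`k`-algebra such a `yⱼ` must be one of the `dⱼ`-th roots of unity of `k` (`exists_root`), so any
point of `V(I)` with unit coordinates in a local ring factors through some `φ_λ`: this is
`exists_ker_phi_le`.  It is used twice.

* For a prime `p ⊇ I` avoiding the variables, it is applied to the fraction field of `A/p` and gives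
  `𝔞_λ ≤ p`.  A prime over `I` containing one variable contains all of them, because every exponent
  `a i j` is positive, and `𝔪` strictly contains every `𝔞_λ`.  With the incomparability of the
  `𝔞_λ` (`lam_eq_of_le`) this determines the minimal primes of `I`.
* Applied to the localizations of `B/IB` at its maximal ideals, it shows that an element of
  `⋂ 𝔞_λ` vanishes in `B/IB`, i.e. lies in `S(I)` (`eq_zero_of_mem`).

The height of `𝔞_λ` is at most `n` because `𝔞_λ ⊊ 𝔪` and `dim A = n + 1`; specialising
`y₁, …, yₙ` to `λ₁, …, λₙ` one at a time gives a chain of primes of length `n` ending at `𝔞_λ`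
(`chain_lt`, `chain_last`).

Two facts about `L` enter.  Its adjugate has positive entries (`adjugate_pos`): all rows are equal,
as `ker L` is spanned by `(1, …, 1)`, and the diagonal entries are determinants of strictly
diagonally dominant matrices.  And `d = d₁ ⋯ dₙ` (`prod_eq`): up to sign,
`adj L = Q · adj (diag(d₁, …, dₙ, 0)) · P`, where the last column of `Q` is `±(1, …, 1)`.
-/

namespace PCB

/-! ### The adjugate of a PCB matrix -/

/-- The characteristic polynomial of `-M` has no root in `[0, ∞)`, since `t + M` is still diagonally
dominant for `t ≥ 0`; being monic, it is positive at `0`. -/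

lemma det_pos_of_diag_dominant {n : ℕ} (M : Matrix (Fin n) (Fin n) ℝ)
    (h : ∀ i, ∑ j ∈ Finset.univ.erase i, |M i j| < M i i) : 0 < M.det := by
  have key : ∀ t : ℝ, 0 ≤ t → ((-M).charpoly).eval t ≠ 0 := by
    intro t ht
    rw [Matrix.eval_charpoly]
    apply det_ne_zero_of_sum_row_lt_diag
    intro i
    have hi : 0 ≤ M i i := le_trans (Finset.sum_nonneg fun _ _ => abs_nonneg _) (h i).le
    have e1 : ∑ j ∈ Finset.univ.erase i, ‖(Matrix.scalar (Fin n) t - -M) i j‖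
        = ∑ j ∈ Finset.univ.erase i, |M i j| := by
      refine Finset.sum_congr rfl fun j hj => ?_
      have : i ≠ j := (Finset.ne_of_mem_erase hj).symm
      simp [Matrix.diagonal_apply_ne _ this]
    have e2 : ‖(Matrix.scalar (Fin n) t - -M) i i‖ = t + M i i := by
      simp [abs_of_nonneg (add_nonneg ht hi)]
    rw [e1, e2]
    linarith [h i]
  have h0 : ((-M).charpoly).eval 0 = M.det := by
    rw [Matrix.eval_charpoly]; simp
  rw [← h0]
  by_contra hneg
  have hlt : ((-M).charpoly).eval 0 < 0 := lt_of_le_of_ne (not_lt.mp hneg) (key 0 le_rfl)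
  have hn : n ≠ 0 := by
    rintro rfl
    rw [h0] at hlt
    simp at hlt
    linarith
  have hdeg : 0 < ((-M).charpoly).degree := by
    rw [Matrix.charpoly_degree_eq_dim]
    simpa using Nat.pos_of_ne_zero hn
  have ht := Polynomial.tendsto_atTop_of_leadingCoeff_nonneg _ hdeg
    (by rw [(Matrix.charpoly_monic (-M)).leadingCoeff]; exact zero_le_one)
  obtain ⟨b, hb0, hb⟩ := ((Filter.eventually_ge_atTop (0 : ℝ)).and
    (ht.eventually_ge_atTop 1)).exists
  obtain ⟨c, hc, hc0⟩ := intermediate_value_Icc hb0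
    ((-M).charpoly).continuous.continuousOn (show (0 : ℝ) ∈ Set.Icc _ _ from ⟨hlt.le, by linarith⟩)
  exact key c hc.1 hc0

section
variable {n : ℕ} {a : Fin (n + 1) → Fin (n + 1) → ℕ}
  {L : Matrix (Fin (n + 1)) (Fin (n + 1)) ℤ}

lemma mulVec_eq (hsum : ∀ i, a i i = ∑ j ∈ Finset.univ.erase i, a i j)
    (hL : ∀ i j, L i j = if i = j then (a i i : ℤ) else -(a i j : ℤ))
    (v : Fin (n + 1) → ℤ) (i : Fin (n + 1)) :
    (L.mulVec v) i = ∑ j ∈ Finset.univ.erase i, (a i j : ℤ) * (v i - v j) := by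
  rw [Matrix.mulVec, dotProduct, ← Finset.add_sum_erase _ _ (Finset.mem_univ i), hL, if_pos rfl,
    hsum i, Nat.cast_sum, Finset.sum_mul, ← Finset.sum_add_distrib]
  refine Finset.sum_congr rfl fun j hj => ?_
  rw [hL, if_neg (Finset.ne_of_mem_erase hj).symm]
  ring

/-- The kernel of `L` consists of constant vectors, by the maximum principle: at an index `m` where
`v` is maximal, `∑ⱼ a m j * (v m - v j) = 0` is a sum of nonnegative terms. -/
lemma const_of_mulVec_eq_zero (hpos : ∀ i j, 0 < a i j)
    (hsum : ∀ i, a i i = ∑ j ∈ Finset.univ.erase i, a i j)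
    (hL : ∀ i j, L i j = if i = j then (a i i : ℤ) else -(a i j : ℤ))
    (v : Fin (n + 1) → ℤ) (hv : L.mulVec v = 0) (i j : Fin (n + 1)) : v i = v j := by
  obtain ⟨m, -, hm⟩ := Finset.exists_max_image Finset.univ v ⟨0, Finset.mem_univ _⟩
  have h0 := mulVec_eq hsum hL v m
  rw [hv, Pi.zero_apply, eq_comm, Finset.sum_eq_zero_iff_of_nonneg] at h0
  · have key : ∀ j, v j = v m := by
      intro j
      rcases eq_or_ne j m with rfl | hj
      · rfl
      · have := h0 j (Finset.mem_erase.2 ⟨hj, Finset.mem_univ _⟩)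
        rcases mul_eq_zero.1 this with h | h
        · have := hpos m j; omega
        · omega
    rw [key i, key j]
  · intro j _
    exact mul_nonneg (by positivity) (sub_nonneg.2 (hm j (Finset.mem_univ _)))

lemma det_eq_zero (hsum : ∀ i, a i i = ∑ j ∈ Finset.univ.erase i, a i j)
    (hL : ∀ i j, L i j = if i = j then (a i i : ℤ) else -(a i j : ℤ)) : L.det = 0 := by
  apply Matrix.exists_mulVec_eq_zero_iff.1
  refine ⟨fun _ => 1, fun h => by simpa using congrFun h 0, ?_⟩
  ext i
  rw [mulVec_eq hsum hL]
  simp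

lemma adjugate_row_eq (hpos : ∀ i j, 0 < a i j)
    (hsum : ∀ i, a i i = ∑ j ∈ Finset.univ.erase i, a i j)
    (hL : ∀ i j, L i j = if i = j then (a i i : ℤ) else -(a i j : ℤ))
    (i i' j : Fin (n + 1)) : L.adjugate i j = L.adjugate i' j := by
  refine const_of_mulVec_eq_zero hpos hsum hL (fun i => L.adjugate i j) ?_ i i'
  ext l
  have := congrFun (congrFun (Matrix.mul_adjugate L) l) j
  rw [det_eq_zero hsum hL, zero_smul] at this
  simpa [Matrix.mul_apply, Matrix.mulVec, dotProduct] using this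

lemma adjugate_pos (hpos : ∀ i j, 0 < a i j)
    (hsum : ∀ i, a i i = ∑ j ∈ Finset.univ.erase i, a i j)
    (hL : ∀ i j, L i j = if i = j then (a i i : ℤ) else -(a i j : ℤ))
    (i j : Fin (n + 1)) : 0 < L.adjugate i j := by
  rw [adjugate_row_eq hpos hsum hL i j j, Matrix.adjugate_fin_succ_eq_det_submatrix,
    Even.neg_one_pow ⟨_, rfl⟩, one_mul]
  have hreal : 0 < ((L.submatrix j.succAbove j.succAbove).map (Int.castRingHom ℝ)).det := by
    apply det_pos_of_diag_dominant
    intro r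
    have e1 : ∑ c ∈ Finset.univ.erase r,
        |((L.submatrix j.succAbove j.succAbove).map (Int.castRingHom ℝ)) r c|
        = ∑ c ∈ Finset.univ.erase r, (a (j.succAbove r) (j.succAbove c) : ℝ) := by
      refine Finset.sum_congr rfl fun c hc => ?_
      have : j.succAbove r ≠ j.succAbove c := fun h =>
        (Finset.ne_of_mem_erase hc) (Fin.succAbove_right_injective h).symm
      rw [Matrix.map_apply, Matrix.submatrix_apply, hL, if_neg this]
      simp
    have e2 : ((L.submatrix j.succAbove j.succAbove).map (Int.castRingHom ℝ)) r r
        = (a (j.succAbove r) (j.succAbove r) : ℝ) := by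
      simp [hL]
    rw [e1, e2]
    norm_cast
    -- row `j.succAbove r` of `L` sums to zero, and removing column `j` leaves a strict surplus
    have h1 : ∑ l, a (j.succAbove r) l
        = a (j.succAbove r) (j.succAbove r) + a (j.succAbove r) (j.succAbove r) := by
      rw [← Finset.add_sum_erase _ _ (Finset.mem_univ (j.succAbove r)), ← hsum]
    rw [Fin.sum_univ_succAbove _ j, ← Finset.add_sum_erase _ _ (Finset.mem_univ r)] at h1
    have := hpos (j.succAbove r) j
    omega
  rw [← RingHom.mapMatrix_apply, ← RingHom.map_det] at hreal
  rw [eq_intCast] at hreal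
  exact_mod_cast hreal

/-- The product of the invariant factors is `d`, read off from
`det P · det Q · adj L = Q · adj (diag(d₁, …, dₙ, 0)) · P`. -/
lemma prod_eq (hpos : ∀ i j, 0 < a i j)
    (hsum : ∀ i, a i i = ∑ j ∈ Finset.univ.erase i, a i j)
    (hL : ∀ i j, L i j = if i = j then (a i i : ℤ) else -(a i j : ℤ))
    (d : ℕ) (P Q : Matrix (Fin (n + 1)) (Fin (n + 1)) ℤ)
    (hP : IsUnit P.det) (hQ : IsUnit Q.det) (dv : Fin n → ℕ)
    (hD : P * L * Q = Matrix.diagonal (Fin.snoc (fun i => (dv i : ℤ)) 0))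
    (hPlast : ∀ i, (d : ℤ) * P (Fin.last n) i = L.adjugate (Fin.last n) i) :
    ∏ i, dv i = d := by
  have hl : ∀ i, 0 < L.adjugate (Fin.last n) i := adjugate_pos hpos hsum hL _
  have hPne : P (Fin.last n) (Fin.last n) ≠ 0 := by
    intro h
    have h1 := hl (Fin.last n)
    rw [← hPlast, h, mul_zero] at h1
    exact lt_irrefl _ h1
  -- `adj(D) = diag(0, …, 0, ∏ dᵢ)`
  have hadjD : ∀ i j, (Matrix.diagonal (Fin.snoc (fun i => (dv i : ℤ)) 0 :
      Fin (n + 1) → ℤ)).adjugate i j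
      = if i = Fin.last n ∧ j = Fin.last n then ∏ i, (dv i : ℤ) else 0 := by
    intro i j
    rw [Matrix.adjugate_diagonal]
    rcases eq_or_ne i j with rfl | hij
    · rw [Matrix.diagonal_apply_eq]
      rcases eq_or_ne i (Fin.last n) with rfl | hi
      · have : Finset.univ.erase (Fin.last n) = Finset.univ.map Fin.castSuccEmb := by
          ext x
          simp only [Finset.mem_erase, Finset.mem_univ, and_true, Finset.mem_map, true_and]
          constructor
          · intro h; exact ⟨x.castPred h, by simp⟩
          · rintro ⟨y, rfl⟩; exact (Fin.castSucc_lt_last y).ne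
        rw [this, Finset.prod_map]
        simp
      · rw [if_neg (fun h => hi h.1)]
        exact Finset.prod_eq_zero (i := Fin.last n)
          (Finset.mem_erase.2 ⟨hi.symm, Finset.mem_univ _⟩) (by simp)
    · rw [Matrix.diagonal_apply_ne _ hij, if_neg]
      rintro ⟨rfl, rfl⟩; exact hij rfl
  have hadj : (P.det * Q.det) • L.adjugate
      = Q * (Matrix.diagonal (Fin.snoc (fun i => (dv i : ℤ)) 0)).adjugate * P := by
    rw [← hD, Matrix.adjugate_mul_distrib, Matrix.adjugate_mul_distrib]
    have h1 : Q * (Q.adjugate * (L.adjugate * P.adjugate)) * P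
      = (Q * Q.adjugate) * L.adjugate * (P.adjugate * P) := by simp only [Matrix.mul_assoc]
    rw [h1, Matrix.mul_adjugate, Matrix.adjugate_mul]
    rw [Matrix.smul_mul, Matrix.one_mul, Matrix.mul_smul, Matrix.mul_one, smul_smul]
  have hent : ∀ i j, P.det * Q.det * L.adjugate i j
      = Q i (Fin.last n) * (∏ i, (dv i : ℤ)) * P (Fin.last n) j := by
    intro i j
    have := congrFun (congrFun hadj i) j
    simpa only [Matrix.smul_apply, smul_eq_mul, Matrix.mul_apply, hadjD, ite_and, mul_ite,
      mul_zero, ite_mul, zero_mul, Finset.sum_ite_eq', Finset.sum_ite_eq, Finset.mem_univ, if_true]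
      using this
  have hPQ : IsUnit (P.det * Q.det) := hP.mul hQ
  -- the rows of `adj L` agree, so the last column of `Q` is constant and its entry divides `det Q`
  have hQl : ∀ i, Q i (Fin.last n) = Q (Fin.last n) (Fin.last n) := by
    intro i
    have h1 := hent i (Fin.last n)
    rw [adjugate_row_eq hpos hsum hL i (Fin.last n), hent (Fin.last n) (Fin.last n)] at h1
    have h2 : (∏ i, (dv i : ℤ)) ≠ 0 := by
      intro h0
      have := hent (Fin.last n) (Fin.last n)
      rw [h0, mul_zero, zero_mul] at this
      rcases mul_eq_zero.1 this with h | h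
      · exact hPQ.ne_zero h
      · exact (hl (Fin.last n)).ne' h
    exact (mul_right_cancel₀ h2 (mul_right_cancel₀ hPne h1)).symm
  have hQu : IsUnit (Q (Fin.last n) (Fin.last n)) := by
    refine isUnit_of_dvd_unit ?_ hQ
    rw [Matrix.det_succ_column Q (Fin.last n)]
    refine Finset.dvd_sum fun i _ => ?_
    rw [hQl i]
    exact Dvd.dvd.mul_right (Dvd.intro_left _ rfl) _
  have h3 := hent (Fin.last n) (Fin.last n)
  rw [← hPlast, ← mul_assoc] at h3
  have h4 := congrArg Int.natAbs (mul_right_cancel₀ hPne h3)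
  rw [Int.natAbs_mul _ (d : ℤ), Int.natAbs_mul (Q _ _), Int.isUnit_iff_natAbs_eq.1 hPQ,
    Int.isUnit_iff_natAbs_eq.1 hQu, one_mul, one_mul, ← Nat.cast_prod,
    Int.natAbs_natCast, Int.natAbs_natCast] at h4
  exact h4.symm

end

/-! ### Monomial substitutions and binomials -/

section
variable {m : Type*} [Fintype m] {R : Type*} [CommRing R]

/-- The monomial substitution of a tuple of units `y` along the columns of an integer matrix `M`:
its `i`-th entry is `∏ⱼ yⱼ ^ M j i`. -/
def mono (M : Matrix m m ℤ) (y : m → Rˣ) (i : m) : Rˣ := ∏ j, y j ^ M j i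

lemma mono_mono (M N : Matrix m m ℤ) (y : m → Rˣ) : mono M (mono N y) = mono (N * M) y := by
  funext i
  simp only [mono, Matrix.mul_apply, ← Finset.prod_zpow, ← zpow_mul]
  rw [Finset.prod_comm]
  refine Finset.prod_congr rfl fun l _ => ?_
  exact (map_sum (zpowersHom Rˣ (y l)).toAdditive _ _).symm

lemma mono_one_matrix [DecidableEq m] (y : m → Rˣ) : mono 1 y = y := by
  funext i
  simp [mono, Matrix.one_apply, apply_ite]

lemma mono_diagonal [DecidableEq m] (D : m → ℤ) (y : m → Rˣ) (i : m) :
    mono (Matrix.diagonal D) y i = y i ^ D i := by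
  simp [mono, Matrix.diagonal_apply, apply_ite]

lemma mono_one (M : Matrix m m ℤ) : mono M (1 : m → Rˣ) = 1 := by
  funext i
  simp [mono]

lemma mono_map {S : Type*} [CommRing S] (g : R →* S) (M : Matrix m m ℤ) (y : m → Rˣ) (i : m) :
    g (mono M y i) = mono M (fun j => Units.map g (y j)) i := by
  rw [← Units.coe_map]
  simp [mono]

variable {k : Type*} [Field k] [Algebra k R]

/-- The binomial `x^{w⁺} - c x^{w⁻}`, where `w` is the `j`-th column of `M`. -/
noncomputable def bin (M : Matrix m m ℤ) (c : k) (j : m) : MvPolynomial m k :=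
  ∏ i, X i ^ (M i j).toNat - C c * ∏ i, X i ^ (-(M i j)).toNat

/-- At a tuple of units `u`, the binomial of the exponent vector `w` vanishes exactly when
`u ^ w = c`. -/
lemma aeval_bin (M : Matrix m m ℤ) (c : k) (j : m) (u : m → Rˣ) :
    aeval (fun i => (u i : R)) (bin M c j) = 0 ↔ (mono M u j : R) = algebraMap k R c := by
  have h : (∏ i, u i ^ (M i j).toNat : Rˣ) = mono M u j * ∏ i, u i ^ (-(M i j)).toNat := by
    rw [mono, ← Finset.prod_mul_distrib]
    refine Finset.prod_congr rfl fun i _ => ?_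
    rw [← zpow_natCast, ← zpow_natCast, ← zpow_add]
    congr 1
    omega
  have h' := congrArg (Units.val) h
  simp only [Units.coe_prod, Units.val_mul, Units.val_pow_eq_pow_val] at h'
  simp only [bin, map_sub, map_mul, map_prod, map_pow, aeval_X, MvPolynomial.aeval_C]
  rw [h', ← sub_mul]
  have hu : IsUnit (∏ i, (u i : R) ^ (-(M i j)).toNat) := by
    have := (∏ i, u i ^ (-(M i j)).toNat : Rˣ).isUnit
    simpa only [Units.coe_prod, Units.val_pow_eq_pow_val] using this
  rw [hu.mul_left_eq_zero, sub_eq_zero]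

end

/-! ### The curves `𝔞_λ` -/

/-- In a local `k`-algebra the only `d`-th roots of unity are those of `k`, once `k` has `d` of
them: `∏ (z - ζ) = z ^ d - 1 = 0` and at most one factor fails to be a unit. -/
lemma exists_root {k R : Type*} [Field k] [CommRing R] [IsLocalRing R] [Algebra k R] {d : ℕ}
    (hd : 0 < d) {ζ : k} (hζ : IsPrimitiveRoot ζ d) (z : R) (hz : z ^ d = 1) :
    ∃ c : k, c ^ d = 1 ∧ z = algebraMap k R c := by
  classical
  have h := congrArg (Polynomial.aeval z) (Polynomial.X_pow_sub_one_eq_prod hd hζ)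
  simp only [map_sub, map_pow, Polynomial.aeval_X, map_one, hz, sub_self, map_prod,
    Polynomial.aeval_C] at h
  obtain ⟨c, hc, hcu⟩ : ∃ c ∈ Polynomial.nthRootsFinset d (1 : k),
      ¬ IsUnit (z - algebraMap k R c) := by
    by_contra! hcon
    have : IsUnit (∏ c ∈ Polynomial.nthRootsFinset d (1 : k), (z - algebraMap k R c)) := by
      rw [IsUnit.prod_iff]; exact hcon
    rw [← h] at this
    exact not_isUnit_zero this
  refine ⟨c, (Polynomial.mem_nthRootsFinset hd 1).1 hc, ?_⟩
  rw [← Finset.mul_prod_erase _ _ hc] at h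
  have hu : IsUnit (∏ c' ∈ (Polynomial.nthRootsFinset d (1 : k)).erase c,
      (z - algebraMap k R c')) := by
    rw [IsUnit.prod_iff]
    intro c' hc'
    by_contra hcon
    have h1 : (z - algebraMap k R c') - (z - algebraMap k R c) = algebraMap k R (c - c') := by
      rw [map_sub]; ring
    have h2 : IsUnit (algebraMap k R (c - c')) :=
      (IsUnit.mk0 _ (sub_ne_zero.2 (Finset.ne_of_mem_erase hc').symm)).map _
    rw [← h1] at h2
    have h3 := IsLocalRing.nonunits_add (a := z - algebraMap k R c')
      (b := -(z - algebraMap k R c)) hcon (by rwa [mem_nonunits_iff, IsUnit.neg_iff])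
    rw [← sub_eq_add_neg] at h3
    exact h3 h2
  exact sub_eq_zero.1 (hu.mul_left_eq_zero.1 h.symm)

section
variable {n : ℕ} {k : Type*} [Field k]

/-- The `k`-algebra map `φ_λ : k[x₀, …, xₙ] → k[t]`, for a tuple `λ` of units. -/
noncomputable def phi (P : Matrix (Fin (n + 1)) (Fin (n + 1)) ℤ) (lam : Fin n → kˣ) :
    MvPolynomial (Fin (n + 1)) k →ₐ[k] Polynomial k :=
  aeval (fun i : Fin (n + 1) =>
    Polynomial.C (∏ j : Fin n, (lam j : k) ^ (P j.castSucc i)) *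
      (Polynomial.X : Polynomial k) ^ (P (Fin.last n) i).toNat)

/-- The tuple `(λ₁, …, λₙ, t)` of units of a `k`-algebra `R`. -/
def pt {R : Type*} [CommRing R] [Algebra k R] (lam : Fin n → kˣ) (t : Rˣ) : Fin (n + 1) → Rˣ :=
  Fin.snoc (α := fun _ => Rˣ) (fun j => Units.map (algebraMap k R : k →* R) (lam j)) t

variable {P : Matrix (Fin (n + 1)) (Fin (n + 1)) ℤ}

/-- In the coordinates `y`, evaluating `φ_λ` at a unit `t` is evaluation at the point `(λ, t)`. -/
lemma aeval_comp_phi (hν : ∀ i, 0 ≤ P (Fin.last n) i) {R : Type*} [CommRing R] [Algebra k R]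
    (lam : Fin n → kˣ) (t : Rˣ) :
    (Polynomial.aeval (t : R)).comp (phi P lam) = aeval (fun i => (mono P (pt lam t) i : R)) := by
  ext i
  simp only [phi, AlgHom.comp_apply, aeval_X, map_mul, Polynomial.aeval_C, map_pow,
    Polynomial.aeval_X]
  have h1 : (∏ j : Fin n, (lam j : k) ^ (P j.castSucc i))
      = ((∏ j : Fin n, lam j ^ (P j.castSucc i) : kˣ) : k) := by
    simp [Units.coe_prod]
  have h2 : (t : R) ^ (P (Fin.last n) i).toNat = ((t ^ P (Fin.last n) i : Rˣ) : R) := by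
    rw [← Units.val_pow_eq_pow_val, ← zpow_natCast, Int.toNat_of_nonneg (hν i)]
  have h3 : algebraMap k R ((∏ j : Fin n, lam j ^ (P j.castSucc i) : kˣ) : k)
      = ((Units.map (algebraMap k R : k →* R) (∏ j : Fin n, lam j ^ (P j.castSucc i)) : Rˣ) : R) :=
    rfl
  rw [h1, h2, h3, ← Units.val_mul]
  congr 1
  rw [mono, Fin.prod_univ_castSucc]
  simp [pt]

lemma ker_phi_le (hν : ∀ i, 0 ≤ P (Fin.last n) i) {R : Type*} [CommRing R] [Algebra k R]
    (lam : Fin n → kˣ) (t : Rˣ) :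
    RingHom.ker (phi P lam) ≤
      RingHom.ker (aeval (R := k) (fun i => (mono P (pt lam t) i : R))) := by
  intro g hg
  rw [RingHom.mem_ker] at hg ⊢
  rw [← aeval_comp_phi hν, AlgHom.comp_apply, hg, map_zero]

/-- The variable `t` as a unit of the Laurent polynomial ring. -/
noncomputable def tU (k : Type*) [Field k] : (LaurentPolynomial k)ˣ :=
  (LaurentPolynomial.isUnit_T (R := k) 1).unit

/-- `𝔞_λ` is also the ideal of the point `(λ, t)` of the Laurent polynomial ring, where `t` is a
unit. -/
lemma ker_phi_eq (hν : ∀ i, 0 ≤ P (Fin.last n) i) (lam : Fin n → kˣ) :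
    RingHom.ker (phi P lam) =
      RingHom.ker (aeval (R := k) (fun i => (mono P (pt lam (tU k)) i : LaurentPolynomial k))) := by
  refine le_antisymm (ker_phi_le hν lam _) fun g hg => ?_
  rw [RingHom.mem_ker] at hg ⊢
  rw [← aeval_comp_phi hν, AlgHom.comp_apply] at hg
  have h : (Polynomial.aeval (tU k : LaurentPolynomial k)) = Polynomial.toLaurentAlg := by
    ext
    simp [tU]
  rw [h] at hg
  exact (map_eq_zero_iff _ Polynomial.toLaurent_injective).1 hg

variable (P) in
/-- `φ_λ` kills the binomial of exponent `P⁻¹ eⱼ` and constant `c` only for `c = λⱼ`. -/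
lemma bin_mem_ker_phi (hP : IsUnit P.det) (hν : ∀ i, 0 ≤ P (Fin.last n) i) (lam : Fin n → kˣ)
    (j : Fin n) (c : k) :
    bin P⁻¹ c j.castSucc ∈ RingHom.ker (phi P lam) ↔ (lam j : k) = c := by
  rw [ker_phi_eq hν, RingHom.mem_ker, aeval_bin, mono_mono, Matrix.mul_nonsing_inv _ hP,
    mono_one_matrix]
  simp only [pt, Fin.snoc_castSucc, Units.coe_map]
  exact (algebraMap k (LaurentPolynomial k)).injective.eq_iff

/-- The ideals `𝔞_λ` are pairwise incomparable. -/
lemma lam_eq_of_le (hP : IsUnit P.det) (hν : ∀ i, 0 ≤ P (Fin.last n) i) (lam mu : Fin n → kˣ)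
    (h : RingHom.ker (phi P lam) ≤ RingHom.ker (phi P mu)) : lam = mu := by
  funext j
  have := h ((bin_mem_ker_phi P hP hν lam j _).2 rfl)
  exact (Units.ext ((bin_mem_ker_phi P hP hν mu j _).1 this)).symm

variable {Q L : Matrix (Fin (n + 1)) (Fin (n + 1)) ℤ} {dv : Fin n → ℕ}

/-- The binomials of the columns of `L` lie in `𝔞_λ` for `λ ∈ Λ(D)`, because
`P L = diag(d₁, …, dₙ, 0) Q⁻¹`. -/
lemma bin_mem (hQ : IsUnit Q.det) (hν : ∀ i, 0 ≤ P (Fin.last n) i)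
    (hD : P * L * Q = Matrix.diagonal (Fin.snoc (fun i => (dv i : ℤ)) 0))
    (lam : Fin n → kˣ) (hlam : ∀ i, lam i ^ dv i = 1) (j : Fin (n + 1)) :
    bin L (1 : k) j ∈ RingHom.ker (phi P lam) := by
  rw [ker_phi_eq hν, RingHom.mem_ker, aeval_bin, mono_mono]
  have h : P * L = Matrix.diagonal (Fin.snoc (fun i => (dv i : ℤ)) 0) * Q⁻¹ := by
    rw [← hD, Matrix.mul_assoc, Matrix.mul_nonsing_inv _ hQ, Matrix.mul_one]
  have h1 : mono (Matrix.diagonal (Fin.snoc (fun i => (dv i : ℤ)) 0)) (pt lam (tU k)) = 1 := by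
    funext i
    rw [mono_diagonal]
    refine Fin.lastCases ?_ (fun i => ?_) i
    · simp
    · simp [pt, ← map_pow, hlam]
  rw [h, ← mono_mono, h1, mono_one]
  simp

/-- A point with unit coordinates in a local ring at which all binomials `x^{Leⱼ} = 1` hold lies
on one of the curves `𝔞_λ`: in the coordinates `y = u ^ P⁻¹` the equations read `yᵢ ^ dᵢ = 1`. -/
lemma exists_ker_phi_le (hP : IsUnit P.det) (hν : ∀ i, 0 ≤ P (Fin.last n) i)
    (hD : P * L * Q = Matrix.diagonal (Fin.snoc (fun i => (dv i : ℤ)) 0))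
    (hdpos : ∀ i, 0 < dv i) (hroots : ∀ i : Fin n, ∃ ζ : k, IsPrimitiveRoot ζ (dv i))
    {R : Type*} [CommRing R] [IsLocalRing R] (ψ : MvPolynomial (Fin (n + 1)) k →+* R)
    (hu : ∀ i, IsUnit (ψ (X i))) (hI : ∀ j, ψ (bin L (1 : k) j) = 0) :
    ∃ lam : Fin n → kˣ, (∀ i, lam i ^ dv i = 1) ∧ RingHom.ker (phi P lam) ≤ RingHom.ker ψ := by
  let _ : Algebra k R := (ψ.comp C).toAlgebra
  choose u hu using hu
  have hψ : ∀ g, ψ g = aeval (R := k) (fun i => (u i : R)) g := by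
    intro g
    have : ψ = ((aeval (R := k) (fun i => (u i : R)) : MvPolynomial (Fin (n + 1)) k →ₐ[k] R) :
        MvPolynomial (Fin (n + 1)) k →+* R) := by
      ext i
      · simp [RingHom.algebraMap_toAlgebra]
      · simp [hu]
    exact congrArg (fun F : MvPolynomial (Fin (n + 1)) k →+* R => F g) this
  have hL1 : mono L u = 1 := by
    funext j
    have := hI j
    rw [hψ, aeval_bin, map_one] at this
    exact Units.ext this
  set y := mono P⁻¹ u with hy
  have hPy : mono P y = u := by
    rw [hy, mono_mono, Matrix.nonsing_inv_mul _ hP, mono_one_matrix]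
  have hyd : ∀ i : Fin n, (y i.castSucc : R) ^ dv i = 1 := by
    intro i
    have : mono (P * L * Q) y = 1 := by
      rw [← mono_mono, ← mono_mono, hPy, hL1, mono_one]
    have := congrFun this i.castSucc
    rw [hD, mono_diagonal, Fin.snoc_castSucc, zpow_natCast, Pi.one_apply] at this
    rw [← Units.val_pow_eq_pow_val, this, Units.val_one]
  have hex : ∀ i : Fin n, ∃ c : kˣ, c ^ dv i = 1 ∧
      y i.castSucc = Units.map (algebraMap k R : k →* R) c := by
    intro i
    obtain ⟨ζ, hζ⟩ := hroots i
    obtain ⟨c, hc, hyc⟩ := exists_root (hdpos i) hζ _ (hyd i)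
    have hc0 : c ≠ 0 := by
      rintro rfl
      rw [zero_pow (hdpos i).ne'] at hc
      exact zero_ne_one hc
    exact ⟨Units.mk0 c hc0, Units.ext (by simpa using hc), Units.ext hyc⟩
  choose lam hlam hylam using hex
  refine ⟨lam, hlam, ?_⟩
  have hpt : y = pt lam (y (Fin.last n)) := by
    funext i
    refine Fin.lastCases ?_ (fun i => ?_) i
    · simp [pt]
    · simp [pt, hylam]
  intro g hg
  have := ker_phi_le hν lam (y (Fin.last n)) hg
  rw [← hpt, hPy, RingHom.mem_ker, ← hψ] at this
  exact this

/-- Vanishing in a ring is checked at its maximal ideals, where `exists_ker_phi_le` applies. -/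
lemma eq_zero_of_mem (hP : IsUnit P.det) (hν : ∀ i, 0 ≤ P (Fin.last n) i)
    (hD : P * L * Q = Matrix.diagonal (Fin.snoc (fun i => (dv i : ℤ)) 0))
    (hdpos : ∀ i, 0 < dv i) (hroots : ∀ i : Fin n, ∃ ζ : k, IsPrimitiveRoot ζ (dv i))
    {R : Type*} [CommRing R] (ψ : MvPolynomial (Fin (n + 1)) k →+* R)
    (hu : ∀ i, IsUnit (ψ (X i))) (hI : ∀ j, ψ (bin L (1 : k) j) = 0)
    (g : MvPolynomial (Fin (n + 1)) k)
    (hg : ∀ lam : Fin n → kˣ, (∀ i, lam i ^ dv i = 1) → g ∈ RingHom.ker (phi P lam)) :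
    ψ g = 0 := by
  refine eq_zero_of_localization _ fun M hM => ?_
  obtain ⟨lam, hlam, hle⟩ := exists_ker_phi_le hP hν hD hdpos hroots
    ((algebraMap R (Localization.AtPrime M)).comp ψ)
    (fun i => (hu i).map (algebraMap R (Localization.AtPrime M)))
    (fun j => by rw [RingHom.comp_apply, hI, map_zero])
  exact hle (hg lam hlam)

end

/-! ### The height of `𝔞_λ` -/

section
variable {n : ℕ} {k : Type*} [Field k]

/-- The Laurent polynomial ring in `n + 1` variables, as a group algebra. -/
abbrev Tor (n : ℕ) (k : Type*) [Field k] := AddMonoidAlgebra k (Fin (n + 1) → ℤ)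

/-- The coordinates of the torus. -/
noncomputable def Y (n : ℕ) (k : Type*) [Field k] (j : Fin (n + 1)) : (Tor n k)ˣ :=
  (AddMonoidAlgebra.of k (Fin (n + 1) → ℤ)).toHomUnits (Multiplicative.ofAdd (Pi.single j 1))

lemma Y_ne_algebraMap (j : Fin (n + 1)) (c : k) :
    (Y n k j : Tor n k) ≠ algebraMap k (Tor n k) c := by
  intro h
  have h1 : (AddMonoidAlgebra.single (Pi.single j 1) 1 : Tor n k)
      = AddMonoidAlgebra.single 0 c := h
  have h2 := DFunLike.congr_fun (congrArg AddMonoidAlgebra.coeff h1) (Pi.single j 1)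
  simp at h2

/-- Universal property of the torus: its coordinates can be sent to arbitrary units. -/
lemma exists_lift {R : Type*} [CommRing R] [Algebra k R] (z : Fin (n + 1) → Rˣ) :
    ∃ θ : Tor n k →ₐ[k] R, ∀ j, θ (Y n k j) = z j := by
  let F : Multiplicative (Fin (n + 1) → ℤ) →* R :=
    { toFun := fun w => ((∏ j, z j ^ (Multiplicative.toAdd w j) : Rˣ) : R)
      map_one' := by simp
      map_mul' := fun v w => by
        rw [← Units.val_mul, ← Finset.prod_mul_distrib]
        congr 2
        funext j
        rw [← zpow_add]
        rfl }
  refine ⟨AddMonoidAlgebra.lift k R _ F, fun j => ?_⟩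
  have : (AddMonoidAlgebra.lift k R _ F) (Y n k j) = F (Multiplicative.ofAdd (Pi.single j 1)) :=
    AddMonoidAlgebra.lift_of F _
  rw [this]
  simp only [F, MonoidHom.coe_mk, OneHom.coe_mk, toAdd_ofAdd]
  congr 1
  rw [Finset.prod_eq_single j]
  · simp
  · intro i _ hi; simp [hi]
  · simp

/-- The generic torus point with its first `r` coordinates specialised to `λ₁, …, λᵣ`.  It is only
meant for `r ≤ n`; beyond that the last coordinate takes the value `1`. -/
noncomputable def Yr (lam : Fin n → kˣ) (r : ℕ) (j : Fin (n + 1)) : (Tor n k)ˣ :=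
  if (j : ℕ) < r then pt lam 1 j else Y n k j

/-- The prime ideal of `A` of the closure of the subtorus coset `y₁ = λ₁, …, yᵣ = λᵣ`. -/
noncomputable def chain (P : Matrix (Fin (n + 1)) (Fin (n + 1)) ℤ) (lam : Fin n → kˣ) (r : ℕ) :
    Ideal (MvPolynomial (Fin (n + 1)) k) :=
  RingHom.ker (aeval (R := k) (fun i => (mono P (Yr lam r) i : Tor n k)))

variable {P : Matrix (Fin (n + 1)) (Fin (n + 1)) ℤ}

instance chain_isPrime (lam : Fin n → kˣ) (r : ℕ) : (chain P lam r).IsPrime :=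
  RingHom.ker_isPrime _

lemma ker_le_of_hom {R S : Type*} [CommRing R] [CommRing S] [Algebra k R] [Algebra k S]
    (θ : R →ₐ[k] S) (y : Fin (n + 1) → Rˣ) (z : Fin (n + 1) → Sˣ) (h : ∀ j, θ (y j) = z j) :
    RingHom.ker (aeval (R := k) (fun i => (mono P y i : R))) ≤
      RingHom.ker (aeval (R := k) (fun i => (mono P z i : S))) := by
  have hc : θ.comp (aeval (R := k) (fun i => (mono P y i : R)))
      = aeval (R := k) (fun i => (mono P z i : S)) := by
    ext i
    simp only [AlgHom.comp_apply, aeval_X]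
    have := mono_map (θ : R →* S) P y i
    have hz : (fun j => Units.map (θ : R →* S) (y j)) = z := by
      funext j; exact Units.ext (h j)
    rw [hz] at this
    exact this
  intro g hg
  rw [RingHom.mem_ker] at hg ⊢
  rw [← hc, AlgHom.comp_apply, hg, map_zero]

lemma pt_castSucc {R : Type*} [CommRing R] [Algebra k R] (lam : Fin n → kˣ) (t : Rˣ) (j : Fin n) :
    (pt lam t j.castSucc : R) = algebraMap k R (lam j) := by
  simp [pt]

/-- The inclusion is the specialisation of `y_{r+1}`; it is strict because of the binomial
expressing `y_{r+1} = λ_{r+1}`. -/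
lemma chain_lt (hP : IsUnit P.det) (lam : Fin n → kˣ) (r : Fin n) :
    chain P lam r < chain P lam (r + 1) := by
  refine lt_of_le_of_ne ?_ ?_
  · obtain ⟨θ, hθ⟩ := exists_lift (k := k) (Yr lam ((r : ℕ) + 1))
    refine ker_le_of_hom θ _ _ fun j => ?_
    by_cases hj : (j : ℕ) < r
    · obtain ⟨j, rfl⟩ : ∃ j' : Fin n, j = j'.castSucc :=
        ⟨⟨j, by omega⟩, rfl⟩
      rw [Yr, Yr, if_pos hj, if_pos (by omega), pt_castSucc]
      exact θ.commutes _
    · rw [Yr, if_neg hj, hθ]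
  · intro h
    have hiff : ∀ s, bin P⁻¹ (lam r : k) r.castSucc ∈ chain P lam s ↔
        (Yr lam s r.castSucc : Tor n k) = algebraMap k _ (lam r : k) := by
      intro s
      rw [chain, RingHom.mem_ker, aeval_bin, mono_mono, Matrix.mul_nonsing_inv _ hP,
        mono_one_matrix]
    have h1 := (hiff (r + 1)).2 (by
      rw [Yr, if_pos (by simp), pt_castSucc])
    rw [← h, hiff, Yr, if_neg (by simp)] at h1
    exact Y_ne_algebraMap _ _ h1

lemma chain_last (hν : ∀ i, 0 ≤ P (Fin.last n) i) (lam : Fin n → kˣ) :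
    chain P lam n = RingHom.ker (phi P lam) := by
  refine le_antisymm ?_ ?_
  · rw [ker_phi_eq hν]
    obtain ⟨θ, hθ⟩ := exists_lift (k := k) (pt lam (tU k))
    refine ker_le_of_hom θ _ _ fun j => ?_
    refine Fin.lastCases ?_ (fun j => ?_) j
    · rw [Yr, if_neg (by simp), hθ]
    · rw [Yr, if_pos (by simp), pt_castSucc, pt_castSucc]
      exact θ.commutes _
  · have : Yr lam n = pt lam (Y n k (Fin.last n)) := by
      funext j
      refine Fin.lastCases ?_ (fun j => ?_) j
      · simp [Yr, pt]
      · simp [Yr, pt]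
    rw [chain, this]
    exact ker_phi_le hν lam _

/-- `φ_λ` sends every variable to a nonconstant monomial, so its kernel lies in `𝔪`,
written here as the kernel of evaluation at the origin; it contains no variable. -/
lemma ker_phi_lt (hν : ∀ i, 0 < P (Fin.last n) i) (lam : Fin n → kˣ) :
    RingHom.ker (phi P lam) < RingHom.ker (aeval (R := k) (fun _ : Fin (n + 1) => (0 : k))) := by
  have hc : (Polynomial.aeval (0 : k)).comp (phi P lam)
      = aeval (R := k) (fun _ : Fin (n + 1) => (0 : k)) := by
    ext i
    have : (P (Fin.last n) i).toNat ≠ 0 := by have := hν i; omega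
    simp [phi, this]
  refine lt_of_le_of_ne ?_ ?_
  · intro g hg
    rw [RingHom.mem_ker] at hg ⊢
    rw [← hc, AlgHom.comp_apply, hg, map_zero]
  · intro h
    have h1 : (X 0 : MvPolynomial (Fin (n + 1)) k) ∈ RingHom.ker (phi P lam) := by
      rw [h, RingHom.mem_ker, aeval_X]
    rw [RingHom.mem_ker] at h1
    simp [phi, Finset.prod_eq_zero_iff, zpow_ne_zero] at h1

lemma X_notMem (lam : Fin n → kˣ) (i : Fin (n + 1)) :
    (X i : MvPolynomial (Fin (n + 1)) k) ∉ RingHom.ker (phi P lam) := by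
  intro h1
  rw [RingHom.mem_ker] at h1
  simp [phi, Finset.prod_eq_zero_iff, zpow_ne_zero] at h1

lemma height_eq (hP : IsUnit P.det) (hν : ∀ i, 0 < P (Fin.last n) i) (lam : Fin n → kˣ)
    (h : (RingHom.ker (phi P lam)).IsPrime) :
    Order.height (⟨RingHom.ker (phi P lam), h⟩ :
      PrimeSpectrum (MvPolynomial (Fin (n + 1)) k)) = (n : ℕ∞) := by
  apply le_antisymm
  · have hlt : (⟨RingHom.ker (phi P lam), h⟩ : PrimeSpectrum (MvPolynomial (Fin (n + 1)) k)) <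
        ⟨RingHom.ker (aeval (R := k) (fun _ : Fin (n + 1) => (0 : k))), RingHom.ker_isPrime _⟩ :=
      ker_phi_lt hν lam
    have hdim : Order.krullDim (PrimeSpectrum (MvPolynomial (Fin (n + 1)) k))
        = ((n + 1 : ℕ) : WithBot ℕ∞) := by
      have := MvPolynomial.ringKrullDim_of_isNoetherianRing (R := k) (ι := Fin (n + 1))
      rw [ringKrullDim_eq_zero_of_field, zero_add] at this
      simpa [ringKrullDim] using this
    have h1 := (Order.height_add_one_le hlt).trans
      (WithBot.coe_le_coe.1 ((Order.height_le_krullDim _).trans hdim.le))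
    have h1' : Order.height (⟨RingHom.ker (phi P lam), h⟩ :
        PrimeSpectrum (MvPolynomial (Fin (n + 1)) k)) + 1 ≤ (n : ℕ∞) + 1 := by
      exact_mod_cast h1
    exact (ENat.add_le_add_iff_right (by simp)).1 h1'
  · let s : LTSeries (PrimeSpectrum (MvPolynomial (Fin (n + 1)) k)) :=
      LTSeries.mk n (fun r => ⟨chain P lam r, chain_isPrime lam r⟩)
        (Fin.strictMono_iff_lt_succ.2 fun r => by
          rw [← PrimeSpectrum.asIdeal_lt_asIdeal]
          simpa using chain_lt hP lam r)
    refine Order.length_le_height (p := s) ?_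
    change chain P lam n ≤ _
    exact (chain_last (fun i => (hν i).le) lam).le

end

/-! ### Generators and associated primes -/

/-- The PCB generator `f_j` is the binomial of the `j`-th column of `L`. -/
lemma bin_eq {n : ℕ} {k : Type*} [Field k] {a : Fin (n + 1) → Fin (n + 1) → ℕ}
    {L : Matrix (Fin (n + 1)) (Fin (n + 1)) ℤ}
    (hL : ∀ i j, L i j = if i = j then (a i i : ℤ) else -(a i j : ℤ)) (j : Fin (n + 1)) :
    bin L (1 : k) j = X j ^ a j j - ∏ i ∈ Finset.univ.erase j, X i ^ a i j := by
  rw [bin, map_one, one_mul]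
  congr 1
  · rw [Finset.prod_eq_single j]
    · simp [hL]
    · intro i _ hi; simp [hL, hi]
    · simp
  · rw [← Finset.mul_prod_erase _ _ (Finset.mem_univ j)]
    have : (-(L j j)).toNat = 0 := by simp [hL]
    rw [this, pow_zero, one_mul]
    refine Finset.prod_congr rfl fun i hi => ?_
    simp [hL, Finset.ne_of_mem_erase hi]

/-- The associated primes of a finite intersection of pairwise incomparable primes. -/
lemma associatedPrimes_sInf {A : Type*} [CommRing A] [IsNoetherianRing A] (s : Set (Ideal A))
    (hs : s.Finite) (hp : ∀ p ∈ s, p.IsPrime) (hinc : ∀ p ∈ s, ∀ q ∈ s, p ≤ q → p = q) :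
    associatedPrimes A (A ⧸ sInf s) = s := by
  classical
  have hcolon : ∀ x : A, (⊥ : Submodule A (A ⧸ sInf s)).colon {Ideal.Quotient.mk (sInf s) x}
      = sInf {p ∈ s | x ∉ p} := by
    intro x
    ext r
    rw [Submodule.mem_colon_singleton, Submodule.mem_bot, ← Ideal.Quotient.mk_eq_mk,
      ← Submodule.Quotient.mk_smul]
    rw [Submodule.Quotient.mk_eq_zero, smul_eq_mul]
    simp only [Submodule.mem_sInf, Set.mem_ofPred_eq, and_imp]
    constructor
    · intro h p hps hx
      exact ((hp p hps).mem_or_mem (h p hps)).resolve_right hx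
    · intro h p hps
      by_cases hx : x ∈ p
      · exact Ideal.mul_mem_left p _ hx
      · exact Ideal.mul_mem_right _ p (h p hps hx)
  ext p
  rw [AssociatedPrimes.mem_iff, isAssociatedPrime_iff]
  constructor
  · rintro ⟨hpp, x, hx⟩
    obtain ⟨x, rfl⟩ := Ideal.Quotient.mk_surjective x
    rw [hcolon] at hx
    have hfin : {p ∈ s | x ∉ p}.Finite := hs.subset (Set.sep_subset _ _)
    have h1 : hfin.toFinset.inf id ≤ p := by
      rw [hx, Finset.inf_id_eq_sInf]
      simp
    obtain ⟨q, hq, hqp⟩ := hpp.inf_le'.1 h1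
    have hq' : q ∈ {p ∈ s | x ∉ p} := by simpa using hq
    have : p = q := le_antisymm (hx.le.trans (sInf_le hq')) hqp
    exact this ▸ hq'.1
  · intro hps
    refine ⟨hp p hps, ?_⟩
    have hne : ¬ (hs.toFinset.erase p).inf id ≤ p := by
      intro h
      obtain ⟨q, hq, hqp⟩ := (hp p hps).inf_le'.1 h
      rw [Finset.mem_erase, Set.Finite.mem_toFinset] at hq
      exact hq.1 (hinc q hq.2 p hps hqp)
    obtain ⟨x, hx, hxp⟩ := SetLike.not_le_iff_exists.1 hne
    refine ⟨Ideal.Quotient.mk _ x, ?_⟩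
    rw [hcolon]
    have : {q ∈ s | x ∉ q} = {p} := by
      ext q
      simp only [Set.mem_ofPred_eq, Set.mem_singleton_iff]
      constructor
      · rintro ⟨hq, hxq⟩
        by_contra hne
        have : (hs.toFinset.erase p).inf id ≤ q :=
          Finset.inf_le (f := id) (by simp [hne, hq])
        exact hxq (this hx)
      · rintro rfl; exact ⟨hps, hxp⟩
    rw [this, sInf_singleton]

end PCB

/-- Let `I` be the PCB ideal in `A = k[x_0, …, x_n]` associated to
the PCB matrix `L`, with `d` the gcd of the last row of `adj(L)`.  Fix a Smith
decomposition `P L Q = diag(d_1, …, d_n, 0)` whose transforming matrix `P` has last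
row `ν(I) = m(I)/d`.  Assume `k` contains, for each invariant factor `d_i`, `d_i`
distinct `d_i`-th roots of unity (equivalently, a primitive `d_i`-th root of unity;
by the divisibility chain this amounts to the existence of a primitive
`d_n`-th root of unity).  Let `Λ(D)` be the set of tuples `λ : Fin n → k` with
`λ_i^{d_i} = 1`, and for `λ ∈ Λ(D)` let `𝔞_λ` be the kernel of the `k`-algebra map
`φ_λ : A → k[t]`, `x_i ↦ (∏_j λ_j^{P_{j,i}}) · t^{ν_i}`.  Then the `𝔞_λ` are `d`
pairwise distinct prime ideals of height `n` (size minus one); they are precisely the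
minimal primes of `I`; and `S(I) = ⋂_{λ ∈ Λ(D)} 𝔞_λ`.  In particular `S(I)` is a
radical ideal with exactly `d` associated primes. -/
theorem stmt19 {n : ℕ} (hn : 1 ≤ n) (k : Type*) [Field k]
    (a : Fin (n + 1) → Fin (n + 1) → ℕ) (hpos : ∀ i j, 0 < a i j)
    (hsum : ∀ i, a i i = ∑ j ∈ Finset.univ.erase i, a i j)
    (L : Matrix (Fin (n + 1)) (Fin (n + 1)) ℤ)
    (hL : ∀ i j, L i j = if i = j then (a i i : ℤ) else -(a i j : ℤ))
    (f : Fin (n + 1) → MvPolynomial (Fin (n + 1)) k)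
    (hf : ∀ j, f j = X j ^ a j j - ∏ i ∈ Finset.univ.erase j, X i ^ a i j)
    (I : Ideal (MvPolynomial (Fin (n + 1)) k)) (hI : I = Ideal.span (Set.range f))
    (d : ℕ) (hd : (d : ℤ) = Finset.univ.gcd (fun i => L.adjugate (Fin.last n) i))
    (P Q : Matrix (Fin (n + 1)) (Fin (n + 1)) ℤ)
    (hP : IsUnit P.det) (hQ : IsUnit Q.det)
    (dv : Fin n → ℕ) (hdpos : ∀ i, 0 < dv i)
    (hdvd : ∀ i j : Fin n, i ≤ j → (dv i : ℤ) ∣ (dv j : ℤ))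
    (hD : P * L * Q = Matrix.diagonal (Fin.snoc (fun i => (dv i : ℤ)) 0))
    (hPlast : ∀ i, (d : ℤ) * P (Fin.last n) i = L.adjugate (Fin.last n) i)
    (hroots : ∀ i : Fin n, ∃ ζ : k, IsPrimitiveRoot ζ (dv i))
    (𝔞 : (Fin n → k) → Ideal (MvPolynomial (Fin (n + 1)) k))
    (h𝔞 : ∀ lam : Fin n → k, 𝔞 lam = RingHom.ker (MvPolynomial.aeval (R := k)
      (fun i : Fin (n + 1) =>
        Polynomial.C (∏ j : Fin n, lam j ^ (P j.castSucc i)) *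
          (Polynomial.X : Polynomial k) ^ (P (Fin.last n) i).toNat)))
    (SI : Ideal (MvPolynomial (Fin (n + 1)) k))
    (hSI : SI = (I.map (algebraMap (MvPolynomial (Fin (n + 1)) k)
        (Localization (Submonoid.powers (∏ i, (X i : MvPolynomial (Fin (n + 1)) k)))))).comap
      (algebraMap (MvPolynomial (Fin (n + 1)) k)
        (Localization (Submonoid.powers (∏ i, (X i : MvPolynomial (Fin (n + 1)) k)))))) :
    (∀ lam mu : Fin n → k, (∀ i, lam i ^ dv i = 1) → (∀ i, mu i ^ dv i = 1) →
        𝔞 lam = 𝔞 mu → lam = mu) ∧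
      {J : Ideal (MvPolynomial (Fin (n + 1)) k) |
        ∃ lam : Fin n → k, (∀ i, lam i ^ dv i = 1) ∧ J = 𝔞 lam}.ncard = d ∧
      (∀ lam : Fin n → k, (∀ i, lam i ^ dv i = 1) →
        (𝔞 lam).IsPrime ∧ 𝔞 lam ∈ I.minimalPrimes ∧
          ∀ h : (𝔞 lam).IsPrime,
            Order.height (⟨𝔞 lam, h⟩ : PrimeSpectrum (MvPolynomial (Fin (n + 1)) k))
              = (n : ℕ∞)) ∧
      (∀ p ∈ I.minimalPrimes,
        ∃ lam : Fin n → k, (∀ i, lam i ^ dv i = 1) ∧ p = 𝔞 lam) ∧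
      SI = sInf {J : Ideal (MvPolynomial (Fin (n + 1)) k) |
        ∃ lam : Fin n → k, (∀ i, lam i ^ dv i = 1) ∧ J = 𝔞 lam} ∧
      SI.IsRadical ∧
      (associatedPrimes (MvPolynomial (Fin (n + 1)) k)
        (MvPolynomial (Fin (n + 1)) k ⧸ SI)).ncard = d := by
  -- the exponents `νᵢ` are positive, so the truncation `toNat` is harmless
  have hν : ∀ i, 0 < P (Fin.last n) i := by
    intro i
    have h1 := PCB.adjugate_pos hpos hsum hL (Fin.last n) i
    rw [← hPlast] at h1
    exact pos_of_mul_pos_right h1 (Int.natCast_nonneg d)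
  have hν' : ∀ i, 0 ≤ P (Fin.last n) i := fun i => (hν i).le
  have hfbin : ∀ j, f j = PCB.bin L (1 : k) j := fun j => by rw [hf, PCB.bin_eq hL]
  have hunit : ∀ lam : Fin n → k, (∀ i, lam i ^ dv i = 1) →
      ∃ U : Fin n → kˣ, (∀ i, U i ^ dv i = 1) ∧ lam = fun i => (U i : k) := by
    intro lam hlam
    refine ⟨fun i => (IsUnit.of_pow_eq_one (hlam i) (hdpos i).ne').unit, fun i => ?_, ?_⟩
    · exact Units.ext (by simpa using hlam i)
    · funext i; simp
  have hphi : ∀ U : Fin n → kˣ, 𝔞 (fun i => (U i : k)) = RingHom.ker (PCB.phi P U) :=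
    fun U => h𝔞 _
  set S : Set (Ideal (MvPolynomial (Fin (n + 1)) k)) :=
    {J | ∃ lam : Fin n → k, (∀ i, lam i ^ dv i = 1) ∧ J = 𝔞 lam} with hS
  have hSmem : ∀ J, J ∈ S ↔ ∃ U : Fin n → kˣ, (∀ i, U i ^ dv i = 1) ∧
      J = RingHom.ker (PCB.phi P U) := by
    intro J
    constructor
    · rintro ⟨lam, hlam, rfl⟩
      obtain ⟨U, hU, rfl⟩ := hunit lam hlam
      exact ⟨U, hU, hphi U⟩
    · rintro ⟨U, hU, rfl⟩
      exact ⟨fun i => (U i : k), fun i => by rw [← Units.val_pow_eq_pow_val, hU, Units.val_one],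
        (hphi U).symm⟩
  have hSprime : ∀ p ∈ S, p.IsPrime := by
    intro p hp
    obtain ⟨U, -, rfl⟩ := (hSmem p).1 hp
    exact RingHom.ker_isPrime _
  have hinc : ∀ p ∈ S, ∀ q ∈ S, p ≤ q → p = q := by
    intro p hp q hq hpq
    obtain ⟨U, -, rfl⟩ := (hSmem p).1 hp
    obtain ⟨V, -, rfl⟩ := (hSmem q).1 hq
    rw [PCB.lam_eq_of_le hP hν' U V hpq]
  have hinj : ∀ lam mu : Fin n → k, (∀ i, lam i ^ dv i = 1) → (∀ i, mu i ^ dv i = 1) →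
      𝔞 lam = 𝔞 mu → lam = mu := by
    intro lam mu hlam hmu h
    obtain ⟨U, -, rfl⟩ := hunit lam hlam
    obtain ⟨V, -, rfl⟩ := hunit mu hmu
    rw [hphi, hphi] at h
    rw [PCB.lam_eq_of_le hP hν' U V h.le]
  have hSimg : S = 𝔞 '' (Fintype.piFinset fun i => Polynomial.nthRootsFinset (dv i) (1 : k) :
      Finset (Fin n → k)) := by
    ext J
    simp only [hS, Set.mem_ofPred_eq, Set.mem_image, Finset.mem_coe, Fintype.mem_piFinset,
      Polynomial.mem_nthRootsFinset (hdpos _)]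
    exact ⟨fun ⟨lam, h, e⟩ => ⟨lam, h, e.symm⟩, fun ⟨lam, h, e⟩ => ⟨lam, h, e.symm⟩⟩
  have hSfin : S.Finite := by rw [hSimg]; exact (Finset.finite_toSet _).image _
  have hcard : S.ncard = d := by
    rw [hSimg, Set.InjOn.ncard_image, Set.ncard_coe_finset, Fintype.card_piFinset,
      ← PCB.prod_eq hpos hsum hL d P Q hP hQ dv hD hPlast]
    · refine Finset.prod_congr rfl fun i _ => ?_
      obtain ⟨ζ, hζ⟩ := hroots i
      exact hζ.card_nthRootsFinset
    · intro lam hlam mu hmu h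
      simp only [Finset.mem_coe, Fintype.mem_piFinset,
        Polynomial.mem_nthRootsFinset (hdpos _)] at hlam hmu
      exact hinj lam mu hlam hmu h
  have hIle : ∀ p ∈ S, I ≤ p := by
    intro p hp
    obtain ⟨U, hU, rfl⟩ := (hSmem p).1 hp
    rw [hI, Ideal.span_le]
    rintro _ ⟨j, rfl⟩
    rw [hfbin]
    exact PCB.bin_mem hQ hν' hD U hU j
  have hfI : ∀ j, f j ∈ I := fun j => by rw [hI]; exact Ideal.subset_span ⟨j, rfl⟩
  have hSne : ∃ U : Fin n → kˣ, RingHom.ker (PCB.phi P U) ∈ S :=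
    ⟨1, (hSmem _).2 ⟨1, fun i => by simp, rfl⟩⟩
  -- a prime over `I` avoiding the variables contains some `𝔞_λ`
  have hover : ∀ p : Ideal (MvPolynomial (Fin (n + 1)) k), p.IsPrime → I ≤ p →
      (∀ i, X i ∉ p) → ∃ q ∈ S, q ≤ p := by
    intro p hp hIp hX
    let ψ : MvPolynomial (Fin (n + 1)) k →+* FractionRing (MvPolynomial (Fin (n + 1)) k ⧸ p) :=
      (algebraMap (MvPolynomial (Fin (n + 1)) k ⧸ p) _).comp (Ideal.Quotient.mk p)
    have hψ : ∀ g, ψ g = 0 ↔ g ∈ p := by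
      intro g
      simp only [ψ, RingHom.comp_apply]
      rw [map_eq_zero_iff _ (IsFractionRing.injective _ _), Ideal.Quotient.eq_zero_iff_mem]
    obtain ⟨U, hU, hle⟩ := PCB.exists_ker_phi_le hP hν' hD hdpos hroots ψ
      (fun i => IsUnit.mk0 _ (fun h => hX i ((hψ _).1 h)))
      (fun j => (hψ _).2 (hIp (hfbin j ▸ hfI j)))
    exact ⟨_, (hSmem _).2 ⟨U, hU, rfl⟩, fun g hg => (hψ g).1 (hle hg)⟩
  -- a prime over `I` containing one variable contains all of them, hence strictly contains `𝔞_λ`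
  have hvar : ∀ p : Ideal (MvPolynomial (Fin (n + 1)) k), p.IsPrime → I ≤ p →
      ∀ i, X i ∈ p → ∀ j, X j ∈ p := by
    intro p hp hIp i hi j
    rcases eq_or_ne i j with rfl | hij
    · exact hi
    · have h1 : ∏ i ∈ Finset.univ.erase j, (X i : MvPolynomial (Fin (n + 1)) k) ^ a i j ∈ p :=
        Ideal.mem_of_dvd p (Finset.dvd_prod_of_mem _
          (Finset.mem_erase.2 ⟨hij, Finset.mem_univ i⟩))
          (Ideal.pow_mem_of_mem p hi _ (hpos i j))
      have h2 := p.add_mem (hIp (hfI j)) h1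
      rw [hf, sub_add_cancel] at h2
      exact hp.mem_of_pow_mem _ h2
  have hSmin : ∀ p ∈ S, p ∈ I.minimalPrimes := by
    intro p hp
    refine ⟨⟨hSprime p hp, hIle p hp⟩, fun q hq hqp => ?_⟩
    obtain ⟨r, hr, hrq⟩ := hover q hq.1 hq.2 (fun i hi => by
      obtain ⟨U, -, rfl⟩ := (hSmem p).1 hp
      exact PCB.X_notMem U i (hqp hi))
    rw [← hinc r hr p hp (hrq.trans hqp)]
    exact hrq
  have hminS : ∀ p ∈ I.minimalPrimes, p ∈ S := by
    intro p hp
    have hge : ∃ q ∈ S, q ≤ p := by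
      by_cases hX : ∀ i, X i ∉ p
      · exact hover p hp.1.1 hp.1.2 hX
      · push Not at hX
        obtain ⟨i, hi⟩ := hX
        obtain ⟨U, hU⟩ := hSne
        refine ⟨_, hU, (PCB.ker_phi_lt hν U).le.trans fun g hg => ?_⟩
        have hm := hvar p hp.1.1 hp.1.2 i hi
        -- all variables vanish modulo `p`, so the quotient map is evaluation at the origin
        have hq : (Algebra.ofId k (MvPolynomial (Fin (n + 1)) k ⧸ p)).comp
            (aeval (R := k) (fun _ : Fin (n + 1) => (0 : k))) = Ideal.Quotient.mkₐ k p := by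
          ext j
          simp [Ideal.Quotient.eq_zero_iff_mem.2 (hm j)]
        rw [← Ideal.Quotient.eq_zero_iff_mem, ← Ideal.Quotient.mkₐ_eq_mk k, ← hq,
          AlgHom.comp_apply, RingHom.mem_ker.1 hg, map_zero]
    obtain ⟨q, hq, hqp⟩ := hge
    have := hp.2 ⟨hSprime q hq, hIle q hq⟩ hqp
    rw [le_antisymm this hqp]
    exact hq
  have hSIeq : SI = sInf S := by
    rw [hSI]
    apply le_antisymm
    · refine le_sInf fun p hp => ?_
      have hdisj : Disjoint (Submonoid.powers (∏ i, (X i : MvPolynomial (Fin (n + 1)) k)) :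
          Set (MvPolynomial (Fin (n + 1)) k)) (p : Set (MvPolynomial (Fin (n + 1)) k)) := by
        have hpp := hSprime p hp
        rw [Set.disjoint_left]
        rintro _ ⟨m, rfl⟩ hmem
        obtain ⟨i, -, hi⟩ := hpp.prod_mem_iff.1 (hpp.mem_of_pow_mem _ hmem)
        obtain ⟨U, -, rfl⟩ := (hSmem p).1 hp
        exact PCB.X_notMem U i hi
      rw [← IsLocalization.under_map_of_isPrime_disjoint
        (Submonoid.powers (∏ i, (X i : MvPolynomial (Fin (n + 1)) k)))
        (Localization (Submonoid.powers (∏ i, (X i : MvPolynomial (Fin (n + 1)) k))))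
        (hSprime p hp) hdisj]
      exact Ideal.comap_mono (Ideal.map_mono (hIle p hp))
    · intro g hg
      rw [Ideal.mem_comap, ← Ideal.Quotient.eq_zero_iff_mem]
      let J := I.map (algebraMap (MvPolynomial (Fin (n + 1)) k)
        (Localization (Submonoid.powers (∏ i, (X i : MvPolynomial (Fin (n + 1)) k)))))
      let ψ := (Ideal.Quotient.mk J).comp (algebraMap (MvPolynomial (Fin (n + 1)) k)
        (Localization (Submonoid.powers (∏ i, (X i : MvPolynomial (Fin (n + 1)) k)))))
      have hψu : ∀ i, IsUnit (ψ (X i)) := by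
        intro i
        have h1 : IsUnit (algebraMap (MvPolynomial (Fin (n + 1)) k)
            (Localization (Submonoid.powers (∏ i, (X i : MvPolynomial (Fin (n + 1)) k))))
            (∏ i, X i)) :=
          IsLocalization.map_units _ (⟨_, Submonoid.mem_powers _⟩ : Submonoid.powers
            (∏ i, (X i : MvPolynomial (Fin (n + 1)) k)))
        have h2 := isUnit_of_dvd_unit (map_dvd (algebraMap (MvPolynomial (Fin (n + 1)) k)
          (Localization (Submonoid.powers (∏ i, (X i : MvPolynomial (Fin (n + 1)) k)))))
          (Finset.dvd_prod_of_mem (fun i => (X i : MvPolynomial (Fin (n + 1)) k))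
            (Finset.mem_univ i))) h1
        exact h2.map (Ideal.Quotient.mk J)
      have hψf : ∀ j, ψ (PCB.bin L (1 : k) j) = 0 := by
        intro j
        have h1 : Ideal.Quotient.mk J (algebraMap _ _ (f j)) = 0 :=
          Ideal.Quotient.eq_zero_iff_mem.2 (Ideal.mem_map_of_mem _ (hfI j))
        rw [← hfbin]
        exact h1
      exact PCB.eq_zero_of_mem hP hν' hD hdpos hroots ψ hψu hψf g fun U hU =>
        Submodule.mem_sInf.1 hg _ ((hSmem _).2 ⟨U, hU, rfl⟩)
  refine ⟨hinj, hcard, ?_, hminS, hSIeq, ?_, ?_⟩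
  · intro lam hlam
    have hmem : 𝔞 lam ∈ S := ⟨lam, hlam, rfl⟩
    refine ⟨hSprime _ hmem, hSmin _ hmem, ?_⟩
    obtain ⟨U, -, rfl⟩ := hunit lam hlam
    rw [hphi]
    exact PCB.height_eq hP hν U
  · rw [hSIeq]
    intro g hg
    obtain ⟨m, hm⟩ := hg
    exact Submodule.mem_sInf.2 fun p hp =>
      (hSprime p hp).mem_of_pow_mem m (Submodule.mem_sInf.1 hm p hp)
  · rw [hSIeq, PCB.associatedPrimes_sInf S hSfin hSprime hinc, hcard]
end
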